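/- arXiv:math-ph/0509020 — 8 statements merged into one kernel-verified Lean document; each statement's English description precedes it below -/
import Mathlib

section
/- Let H be a complex Hilbert space and let A be an abelian von Neumann algebra acting on H. Then the map sending a character τ of A to the set β_τ = {p ∈ P(A) : p ≠ 0 and τ(p) = 1} is a bijection from the Gelfand spectrum (character space) of A onto the set of quasipoints of the projection lattice P(A), and this bijection is a homeomorphism from the Gelfand spectrum (with its weak-* topology) onto the Stone spectrum Q(P(A)). -/
/-- A filter base in an ordered set `L` with least element `⊥`:
a nonempty subset not containing `⊥` in which any two elements have a common lower bound. -/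
def IsFilterBase {L : Type*} [PartialOrder L] [OrderBot L] (B : Set L) : Prop :=
  B.Nonempty ∧ ⊥ ∉ B ∧ ∀ a ∈ B, ∀ b ∈ B, ∃ c ∈ B, c ≤ a ∧ c ≤ b

/-- A quasipoint is a maximal filter base. -/
def IsQuasipoint {L : Type*} [PartialOrder L] [OrderBot L] (B : Set L) : Prop :=
  IsFilterBase B ∧ ∀ C : Set L, IsFilterBase C → B ⊆ C → C = B

/-- The set of quasipoints of `L`. -/
def Quasipoint (L : Type*) [PartialOrder L] [OrderBot L] : Type _ :=
  {B : Set L // IsQuasipoint B}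

/-- The basic (cl)open set of the Stone spectrum determined by `a : L`. -/
def Qset {L : Type*} [PartialOrder L] [OrderBot L] (a : L) : Set (Quasipoint L) :=
  {B | a ∈ B.1}

/-- The Stone topology on the set of quasipoints, generated by the sets `Qset a`. -/
instance {L : Type*} [PartialOrder L] [OrderBot L] : TopologicalSpace (Quasipoint L) :=
  TopologicalSpace.generateFrom (Set.range (Qset : L → Set (Quasipoint L)))

/-- The projections of a von Neumann algebra `A`: the self-adjoint idempotents in `A`. -/
def Projection {H : Type*} [NormedAddCommGroup H] [InnerProductSpace ℂ H] [CompleteSpace H]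
    (A : VonNeumannAlgebra H) : Type _ :=
  {p : A.toStarSubalgebra // star p = p ∧ p * p = p}

/-- The projection lattice ordering: `p ≤ q` iff `p * q = p`. -/
noncomputable instance {H : Type*} [NormedAddCommGroup H] [InnerProductSpace ℂ H]
    [CompleteSpace H] (A : VonNeumannAlgebra H) : PartialOrder (Projection A) where
  le p q := p.1 * q.1 = p.1
  le_refl p := p.2.2
  le_trans p q r h1 h2 := by
    show p.1 * r.1 = p.1
    calc p.1 * r.1 = (p.1 * q.1) * r.1 := by rw [h1]
      _ = p.1 * (q.1 * r.1) := mul_assoc _ _ _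
      _ = p.1 * q.1 := by rw [h2]
      _ = p.1 := h1
  le_antisymm p q h1 h2 := by
    have h3 : q.1 * p.1 = p.1 := by
      have h := congrArg star h1
      rwa [star_mul, p.2.1, q.2.1] at h
    exact Subtype.ext (h3.symm.trans h2)

/-- `0` is the least projection. -/
noncomputable instance {H : Type*} [NormedAddCommGroup H] [InnerProductSpace ℂ H]
    [CompleteSpace H] (A : VonNeumannAlgebra H) : OrderBot (Projection A) where
  bot := ⟨0, by simp⟩
  bot_le p := show (0 : A.toStarSubalgebra) * p.1 = 0 from zero_mul _

/-!
Write `D(p) = {τ | τ p = 1}` for a projection `p`. A character takes only the values `0` and `1` on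
projections, so `p ↦ D(p)` embeds the projections of an abelian `A` as an algebra of clopen sets of
the compact Gelfand spectrum. For any algebra of clopen sets separating the points of a compact
space, the points correspond to the quasipoints (Stone's representation theorem).

The sets `D(p)` separate characters because `A` contains the range projections of its elements:
given `τ ≠ σ`, Gelfand duality yields `a, b ∈ A` with `a b = 0`, `τ a ≠ 0`, `σ b ≠ 0`. The range
projection `p` of `a` satisfies `p a = a` and `b p = 0`, which give `τ p = 1`, `σ p = 0`.
-/

section StoneRepresentation

variable {L : Type*} [PartialOrder L] [OrderBot L]

theorem IsFilterBase.not_disjoint {B : Set L} (hB : IsFilterBase B) {p q : L} (hp : p ∈ B)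
    (hq : q ∈ B) : ¬Disjoint p q := by
  intro hpq
  obtain ⟨r, hr, hrp, hrq⟩ := hB.2.2 p hp q hq
  exact hB.2.1 (le_bot_iff.1 (hpq hrp hrq) ▸ hr)

theorem IsFilterBase.isQuasipoint {B : Set L} (hB : IsFilterBase B)
    (hcompl : ∀ p ∉ B, ∃ q ∈ B, Disjoint p q) : IsQuasipoint B := by
  refine ⟨hB, fun C hC hBC => subset_antisymm (fun p hp => ?_) hBC⟩
  by_contra hpB
  obtain ⟨q, hq, hpq⟩ := hcompl p hpB
  exact hC.not_disjoint hp (hBC hq) hpq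

theorem isOpen_Qset (p : L) : IsOpen (Qset p) :=
  TopologicalSpace.isOpen_generateFrom_of_mem ⟨p, rfl⟩

theorem disjoint_Qset {p q : L} (hpq : Disjoint p q) : Disjoint (Qset p) (Qset q) :=
  Set.disjoint_left.2 fun B hp hq => B.2.1.not_disjoint hp hq hpq

variable {X : Type*} {S : L ↪o Set X} (hS : MeasureTheory.IsSetAlgebra (Set.range S))

include hS

theorem map_bot_eq_empty : S ⊥ = ∅ := by
  obtain ⟨p, hp⟩ := hS.empty_mem
  exact Set.subset_eq_empty (S.monotone bot_le) hp

theorem disjoint_of_disjoint_map {p q : L} (hpq : Disjoint (S p) (S q)) : Disjoint p q := by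
  intro r hrp hrq
  rw [← S.le_iff_le, map_bot_eq_empty hS]
  exact hpq (S.monotone hrp) (S.monotone hrq)

theorem exists_map_eq_compl (p : L) : ∃ q, S q = (S p)ᶜ ∧ Disjoint p q := by
  obtain ⟨q, hq⟩ := hS.compl_mem ⟨p, rfl⟩
  exact ⟨q, hq, disjoint_of_disjoint_map hS (hq ▸ disjoint_compl_right)⟩

theorem isFilterBase_setOf_mem (x : X) : IsFilterBase {p | x ∈ S p} := by
  refine ⟨?_, ?_, fun p hp q hq => ?_⟩
  · obtain ⟨p, hp⟩ := hS.univ_mem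
    exact ⟨p, hp.symm.subset (Set.mem_univ x)⟩
  · exact fun hx => Set.notMem_empty x ((map_bot_eq_empty hS).subset hx)
  · obtain ⟨r, hr⟩ := hS.inter_mem ⟨p, rfl⟩ ⟨q, rfl⟩
    refine ⟨r, hr.symm.subset ⟨hp, hq⟩, S.le_iff_le.1 ?_, S.le_iff_le.1 ?_⟩
    · exact hr ▸ Set.inter_subset_left
    · exact hr ▸ Set.inter_subset_right

theorem isQuasipoint_setOf_mem (x : X) : IsQuasipoint {p | x ∈ S p} := by
  refine (isFilterBase_setOf_mem hS x).isQuasipoint fun p hp => ?_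
  obtain ⟨q, hq, hpq⟩ := exists_map_eq_compl hS p
  exact ⟨q, hq.symm.subset hp, hpq⟩

/-- The quasipoint of a point `x`: the elements of `L` whose representing set contains `x`. -/
def quasipointOf (x : X) : Quasipoint L :=
  ⟨{p | x ∈ S p}, isQuasipoint_setOf_mem hS x⟩

theorem quasipointOf_injective (hsep : Pairwise fun x y => ∃ p, x ∈ S p ∧ y ∉ S p) :
    Function.Injective (quasipointOf hS) := by
  intro x y hxy
  by_contra hne
  obtain ⟨p, hx, hy⟩ := hsep hne
  exact hy ((Set.ext_iff.1 (congrArg Subtype.val hxy) p).1 hx)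

variable [TopologicalSpace X] (hopen : ∀ p, IsOpen (S p))

include hopen

theorem continuous_quasipointOf : Continuous (quasipointOf hS) :=
  continuous_generateFrom_iff.2 <| Set.forall_mem_range.2 hopen

theorem isClosed_map (p : L) : IsClosed (S p) := by
  obtain ⟨q, hq, -⟩ := exists_map_eq_compl hS p
  exact isOpen_compl_iff.1 (hq ▸ hopen q)

variable [CompactSpace X]

theorem IsFilterBase.exists_forall_mem_map {B : Set L} (hB : IsFilterBase B) :
    ∃ x, ∀ p ∈ B, x ∈ S p := by
  have : Nonempty B := hB.1.to_subtype
  have hdir : Directed (· ⊇ ·) fun p : B => S p := fun p q => by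
    obtain ⟨r, hr, hrp, hrq⟩ := hB.2.2 p p.2 q q.2
    exact ⟨⟨r, hr⟩, S.monotone hrp, S.monotone hrq⟩
  have hnonempty (p : B) : (S p).Nonempty := by
    rw [Set.nonempty_iff_ne_empty, ← map_bot_eq_empty hS, S.injective.ne_iff]
    exact fun hp => hB.2.1 (hp ▸ p.2)
  have hclosed (p : B) : IsClosed (S p) := isClosed_map hS hopen p
  obtain ⟨x, hx⟩ := IsCompact.nonempty_iInter_of_directed_nonempty_isCompact_isClosed _ hdir
    hnonempty (fun p => (hclosed p).isCompact) hclosed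
  exact ⟨x, fun p hp => Set.mem_iInter.1 hx ⟨p, hp⟩⟩

theorem quasipointOf_surjective : Function.Surjective (quasipointOf hS) := by
  intro B
  obtain ⟨x, hx⟩ := B.2.1.exists_forall_mem_map hS hopen
  exact ⟨x, Subtype.ext (B.2.2 _ (isFilterBase_setOf_mem hS x) hx)⟩

theorem t2Space_quasipoint : T2Space (Quasipoint L) := by
  refine ⟨fun B C hBC => ?_⟩
  obtain ⟨x, rfl⟩ := quasipointOf_surjective hS hopen B
  obtain ⟨y, rfl⟩ := quasipointOf_surjective hS hopen C
  obtain ⟨p, hx, hy⟩ : ∃ p, x ∈ S p ∧ y ∉ S p := by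
    by_contra! hsub
    exact hBC (Subtype.ext ((quasipointOf hS x).2.2 _ (quasipointOf hS y).2.1 hsub).symm)
  obtain ⟨q, hq, hpq⟩ := exists_map_eq_compl hS p
  exact ⟨Qset p, Qset q, isOpen_Qset p, isOpen_Qset q, hx, hq.symm.subset hy, disjoint_Qset hpq⟩

/-- Stone's representation theorem for an algebra of open sets, indexed by `L`, that separates the
points of a compact space. -/
noncomputable def stoneHomeomorph (hsep : Pairwise fun x y => ∃ p, x ∈ S p ∧ y ∉ S p) :
    X ≃ₜ Quasipoint L :=
  have := t2Space_quasipoint hS hopen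
  (continuous_quasipointOf hS hopen).homeoOfEquivCompactToT2
    (f := .ofBijective _ ⟨quasipointOf_injective hS hsep, quasipointOf_surjective hS hopen⟩)

end StoneRepresentation

section Gelfand

theorem exists_continuousMap_mul_eq_zero {X : Type*} [TopologicalSpace X] [T35Space X]
    (𝕜 : Type*) [RCLike 𝕜] {x y : X} (hxy : x ≠ y) :
    ∃ f g : C(X, 𝕜), f * g = 0 ∧ f x ≠ 0 ∧ g y ≠ 0 := by
  obtain ⟨u, hu, hux, huy⟩ :=
    CompletelyRegularSpace.completely_regular x {y} isClosed_singleton hxy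
  let w : C(X, ℝ) := ⟨fun z => 1 / 2 - u z, by fun_prop⟩
  have hwx : w x = 1 / 2 := by simp [w, hux]
  have hwy : w y = -(1 / 2) := by
    simp only [w, ContinuousMap.coe_mk, huy rfl, Pi.one_apply, Set.Icc.coe_one]
    norm_num
  refine ⟨(w ⊔ 0).realToRCLike 𝕜, (-w ⊔ 0).realToRCLike 𝕜, ?_, ?_, ?_⟩
  · ext z
    rcases le_total (w z) 0 with hz | hz <;> simp [hz]
  · simp [hwx]
  · simp [hwy]

open WeakDual

variable {A : Type*} [CommCStarAlgebra A]

theorem eq_of_forall_character_apply_eq {a b : A} (h : ∀ τ : characterSpace ℂ A, τ a = τ b) :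
    a = b :=
  (gelfandTransform_isometry A).injective (ContinuousMap.ext h)

theorem exists_mul_eq_zero_of_character_ne {τ σ : characterSpace ℂ A} (hτσ : τ ≠ σ) :
    ∃ a b : A, a * b = 0 ∧ τ a ≠ 0 ∧ σ b ≠ 0 := by
  obtain ⟨f, g, hfg, hf, hg⟩ := exists_continuousMap_mul_eq_zero ℂ hτσ
  obtain ⟨a, rfl⟩ := (gelfandStarTransform A).surjective f
  obtain ⟨b, rfl⟩ := (gelfandStarTransform A).surjective g
  rw [← map_mul, EmbeddingLike.map_eq_zero_iff] at hfg
  exact ⟨a, b, hfg, hf, hg⟩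

end Gelfand

section RangeProjection

variable {𝕜 H : Type*} [RCLike 𝕜] [NormedAddCommGroup H] [InnerProductSpace 𝕜 H] [CompleteSpace H]

/-- The range projection of an operator `a`: the orthogonal projection onto the closure of its
range. -/
noncomputable def rangeProjection (a : H →L[𝕜] H) : H →L[𝕜] H :=
  a.range.topologicalClosure.starProjection

theorem isStarProjection_rangeProjection (a : H →L[𝕜] H) : IsStarProjection (rangeProjection a) :=
  isStarProjection_starProjection

theorem rangeProjection_mul_self (a : H →L[𝕜] H) : rangeProjection a * a = a := by
  ext x
  exact Submodule.starProjection_eq_self_iff.2 (Submodule.le_topologicalClosure _ ⟨x, rfl⟩)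

theorem mul_rangeProjection_eq_zero {a b : H →L[𝕜] H} (hba : b * a = 0) :
    b * rangeProjection a = 0 := by
  have hker : a.range.topologicalClosure ≤ b.ker := by
    refine Submodule.topologicalClosure_minimal _ ?_ b.isClosed_ker
    rintro _ ⟨x, rfl⟩
    exact DFunLike.congr_fun hba x
  ext x
  exact hker (Submodule.starProjection_apply_mem _ x)

theorem rangeProjection_mem {H : Type*} [NormedAddCommGroup H] [InnerProductSpace ℂ H]
    [CompleteSpace H] {A : VonNeumannAlgebra H} {a : H →L[ℂ] H} (ha : a ∈ A) :
    rangeProjection a ∈ A := by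
  rw [VonNeumannAlgebra.IsStarProjection.mem_iff (isStarProjection_rangeProjection a)]
  intro y hy
  rw [rangeProjection, Submodule.range_starProjection, Module.End.mem_invtSubmodule]
  refine Submodule.topologicalClosure_minimal _ ?_
    (a.range.isClosed_topologicalClosure.preimage y.continuous)
  rintro _ ⟨x, rfl⟩
  have hay : a * y = y * a := VonNeumannAlgebra.mem_commutant_iff.1 hy a ha
  exact Submodule.le_topologicalClosure _ ⟨y x, DFunLike.congr_fun hay x⟩

end RangeProjection

section VonNeumann

open WeakDual

variable {H : Type*} [NormedAddCommGroup H] [InnerProductSpace ℂ H] [CompleteSpace H]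
  {A : VonNeumannAlgebra H}

theorem isClosed_toStarSubalgebra (A : VonNeumannAlgebra H) :
    IsClosed (A.toStarSubalgebra : Set (H →L[ℂ] H)) := by
  rw [VonNeumannAlgebra.coe_toStarSubalgebra, ← A.centralizer_centralizer]
  exact Set.isClosed_centralizer _

theorem compactSpace_characterSpace (A : VonNeumannAlgebra H) :
    CompactSpace (characterSpace ℂ A.toStarSubalgebra) :=
  have := (isClosed_toStarSubalgebra A).completeSpace_coe
  inferInstance

/-- An abelian von Neumann algebra as a commutative C⋆-algebra; reducible, so that its topology
and algebra structure unify with those that `A` inherits from the bounded operators. -/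
noncomputable abbrev commCStarAlgebraOfAbelian
    (habelian : ∀ x y : A.toStarSubalgebra, x * y = y * x) : CommCStarAlgebra A.toStarSubalgebra :=
  have := isClosed_toStarSubalgebra A
  { (inferInstance : CStarAlgebra A.toStarSubalgebra) with mul_comm := habelian }

namespace Projection

theorem isStarProjection (p : Projection A) : IsStarProjection p.1 :=
  ⟨p.2.2, p.2.1⟩

theorem character_apply_eq_zero_or_one (p : Projection A)
    (τ : characterSpace ℂ A.toStarSubalgebra) : τ p.1 = 0 ∨ τ p.1 = 1 :=
  IsIdempotentElem.iff_eq_zero_or_one.1 (p.isStarProjection.isIdempotentElem.map τ)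

/-- The set `D(p)` of characters taking the value `1` on the projection `p`. -/
def characterSet (p : Projection A) : Set (characterSpace ℂ A.toStarSubalgebra) :=
  {τ | τ p.1 = 1}

theorem notMem_characterSet {p : Projection A} {τ : characterSpace ℂ A.toStarSubalgebra} :
    τ ∉ p.characterSet ↔ τ p.1 = 0 := by
  refine ⟨(p.character_apply_eq_zero_or_one τ).resolve_right, fun h0 h1 => ?_⟩
  exact zero_ne_one (h0.symm.trans h1)

theorem ne_zero_of_mem_characterSet {p : Projection A}
    {τ : characterSpace ℂ A.toStarSubalgebra} (hτ : τ ∈ p.characterSet) : p.1 ≠ 0 := by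
  intro hp
  exact notMem_characterSet.2 (by rw [hp, map_zero]) hτ

theorem isOpen_characterSet (p : Projection A) : IsOpen p.characterSet := by
  have heval : Continuous fun τ : characterSpace ℂ A.toStarSubalgebra => τ p.1 :=
    (eval_continuous p.1).comp continuous_subtype_val
  have hcompl : p.characterSetᶜ = {τ | τ p.1 = 0} := Set.ext fun _ => notMem_characterSet
  rw [← isClosed_compl_iff, hcompl]
  exact isClosed_eq heval continuous_const

theorem exists_characterSet_eq_compl (p : Projection A) :
    ∃ q : Projection A, q.characterSet = p.characterSetᶜ := by
  have hp := p.isStarProjection.one_sub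
  refine ⟨⟨1 - p.1, hp.isSelfAdjoint, hp.isIdempotentElem⟩, Set.ext fun τ => ?_⟩
  rw [Set.mem_compl_iff, notMem_characterSet]
  change τ (1 - p.1) = 1 ↔ τ p.1 = 0
  rw [map_sub, map_one, sub_eq_self]

theorem exists_characterSet_eq_union {p q : Projection A} (hpq : Commute p.1 q.1) :
    ∃ r : Projection A, r.characterSet = p.characterSet ∪ q.characterSet := by
  have hr := p.isStarProjection.add_sub_mul_of_commute hpq q.isStarProjection
  refine ⟨⟨p.1 + q.1 - p.1 * q.1, hr.isSelfAdjoint, hr.isIdempotentElem⟩, Set.ext fun τ => ?_⟩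
  change τ (p.1 + q.1 - p.1 * q.1) = 1 ↔ τ p.1 = 1 ∨ τ q.1 = 1
  rw [map_sub, map_add, map_mul]
  grind

section Abelian

variable (habelian : ∀ x y : A.toStarSubalgebra, x * y = y * x)

include habelian

theorem characterSet_subset_iff_le {p q : Projection A} :
    p.characterSet ⊆ q.characterSet ↔ p ≤ q := by
  let := commCStarAlgebraOfAbelian habelian
  refine ⟨fun hsub => eq_of_forall_character_apply_eq fun τ => ?_, fun hle τ hp => ?_⟩
  · rw [map_mul]
    rcases p.character_apply_eq_zero_or_one τ with hp | hp
    · rw [hp, zero_mul]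
    · rw [show τ q.1 = 1 from hsub hp, mul_one]
  · have hmul : τ p.1 * τ q.1 = τ p.1 := by rw [← map_mul, show p.1 * q.1 = p.1 from hle]
    rwa [show τ p.1 = 1 from hp, one_mul] at hmul

/-- The embedding `p ↦ D(p)` of the projections of an abelian von Neumann algebra into the subsets
of its Gelfand spectrum. -/
noncomputable def characterSetEmbedding :
    Projection A ↪o Set (characterSpace ℂ A.toStarSubalgebra) :=
  OrderEmbedding.ofMapLEIff characterSet fun _ _ => characterSet_subset_iff_le habelian

theorem isSetAlgebra_range_characterSetEmbedding :
    MeasureTheory.IsSetAlgebra (Set.range (characterSetEmbedding habelian)) where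
  empty_mem := ⟨⊥, Set.eq_empty_of_forall_notMem fun τ => notMem_characterSet.2 (map_zero τ)⟩
  compl_mem := Set.forall_mem_range.2 exists_characterSet_eq_compl
  union_mem := by
    rintro _ _ ⟨p, rfl⟩ ⟨q, rfl⟩
    exact exists_characterSet_eq_union (habelian p.1 q.1)

theorem exists_mem_characterSet_notMem_characterSet :
    Pairwise fun τ σ : characterSpace ℂ A.toStarSubalgebra =>
      ∃ p : Projection A, τ ∈ p.characterSet ∧ σ ∉ p.characterSet := by
  let := commCStarAlgebraOfAbelian habelian
  intro τ σ hτσ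
  obtain ⟨a, b, hab, ha, hb⟩ := exists_mul_eq_zero_of_character_ne hτσ
  have hp := isStarProjection_rangeProjection a.1
  let p : Projection A := ⟨⟨rangeProjection a.1, rangeProjection_mem a.2⟩,
    Subtype.ext hp.isSelfAdjoint, Subtype.ext hp.isIdempotentElem⟩
  have hpa : p.1 * a = a := Subtype.ext (rangeProjection_mul_self a.1)
  have hbp : b * p.1 = 0 := Subtype.ext <|
    mul_rangeProjection_eq_zero (congrArg Subtype.val ((habelian b a).trans hab))
  refine ⟨p, mul_right_cancel₀ ha ?_, notMem_characterSet.2 (mul_left_cancel₀ hb ?_)⟩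
  · rw [← map_mul, hpa, one_mul]
  · rw [← map_mul, hbp, map_zero, mul_zero]

end Abelian

end Projection

end VonNeumann

/-- For an abelian von Neumann algebra `A` on a Hilbert space `H`, the map sending a character
`τ` of `A` to `β_τ = {p ∈ P(A) : p ≠ 0 ∧ τ p = 1}` is a bijection from the Gelfand spectrum
(character space) of `A` onto the set of quasipoints of the projection lattice of `A`, which is
moreover a homeomorphism from the Gelfand spectrum (with the weak-* topology) onto the Stone
spectrum of the projection lattice. -/
theorem gelfandSpectrum_homeo_stoneSpectrum {H : Type*} [NormedAddCommGroup H]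
    [InnerProductSpace ℂ H] [CompleteSpace H] (A : VonNeumannAlgebra H)
    (habelian : ∀ x y : A.toStarSubalgebra, x * y = y * x) :
    (∀ τ : WeakDual.characterSpace ℂ A.toStarSubalgebra,
      IsQuasipoint {p : Projection A | p.1 ≠ 0 ∧ τ p.1 = 1}) ∧
    ∃ h : WeakDual.characterSpace ℂ A.toStarSubalgebra ≃ₜ Quasipoint (Projection A),
      ∀ τ : WeakDual.characterSpace ℂ A.toStarSubalgebra,
        (h τ).1 = {p : Projection A | p.1 ≠ 0 ∧ τ p.1 = 1} := by
  have hset (τ : WeakDual.characterSpace ℂ A.toStarSubalgebra) :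
      {p : Projection A | p.1 ≠ 0 ∧ τ p.1 = 1} = {p | τ ∈ p.characterSet} :=
    Set.ext fun _ => and_iff_right_of_imp Projection.ne_zero_of_mem_characterSet
  simp only [hset]
  have := compactSpace_characterSpace A
  have hS := Projection.isSetAlgebra_range_characterSetEmbedding habelian
  have hsep := Projection.exists_mem_characterSet_notMem_characterSet habelian
  exact ⟨isQuasipoint_setOf_mem hS,
    stoneHomeomorph hS Projection.isOpen_characterSet hsep, fun _ => rfl⟩
end

section
/- Let L be an orthomodular lattice. The following are equivalent: (i) L is distributive; (ii) for all a, b ∈ L, every quasipoint of L containing a ∨ b contains a or contains b (i.e. Q_a(L) ∪ Q_b(L) = Q_{a∨b}(L)); (iii) for every a ∈ L, every quasipoint of L contains a or contains a⊥ (i.e. Q_a(L) ∪ Q_{a⊥}(L) = Q(L)). -/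
/-!
A quasipoint containing neither `a` nor `b` has an element disjoint from both, and every nonzero
element lies in a quasipoint. Hence `Qset c ⊆ Qset a ∪ Qset b` says that every element disjoint from
`a` and `b` is disjoint from `c`. So (ii) means that `L` is 0-distributive, and (iii) that only `⊥`
is disjoint from both `a` and `oc a`.

Orthomodularity enters through a single consequence: `a ≤ b` and `b ⊓ oc a = ⊥` force `a = b`. Under
(iii) this gives `b ≤ oc a` for all disjoint `a` and `b`, by comparing `b ⊓ oc a` with `b`, and
0-distributivity follows. Comparing `y = (a ⊓ b) ⊔ (a ⊓ c)` with `a ⊓ (b ⊔ c)` in the same way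
upgrades 0-distributivity to distributivity: `a ⊓ (b ⊔ c) ⊓ oc y` is disjoint from `b` and from `c`,
hence from `b ⊔ c`, which lies above it, so it is `⊥`.
-/

namespace IsFilterBase

section PartialOrder

variable {L : Type*} [PartialOrder L] [OrderBot L] {B : Set L} {a b : L}

theorem not_disjoint_s2 (hB : IsFilterBase B) (ha : a ∈ B) (hb : b ∈ B) : ¬Disjoint a b := by
  intro hab
  obtain ⟨c, hc, hca, hcb⟩ := hB.2.2 a ha b hb
  exact hB.2.1 (le_bot_iff.1 (hab hca hcb) ▸ hc)

theorem singleton (ha : a ≠ ⊥) : IsFilterBase {a} :=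
  ⟨Set.singleton_nonempty a, ha.symm, directedOn_singleton a⟩

theorem sUnion_of_isChain {S : Set (Set L)} (hS : S.Nonempty) (hchain : IsChain (· ⊆ ·) S)
    (hbase : ∀ B ∈ S, IsFilterBase B) : IsFilterBase (⋃₀ S) := by
  refine ⟨?_, ?_, Set.directedOn_sUnion hchain.directedOn fun B hB ↦ (hbase B hB).2.2⟩
  · obtain ⟨B, hB⟩ := hS
    exact (hbase B hB).1.mono (Set.subset_sUnion_of_mem hB)
  · rintro ⟨B, hB, hbot⟩
    exact (hbase B hB).2.1 hbot

theorem exists_isQuasipoint_superset (hB : IsFilterBase B) :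
    ∃ C, IsQuasipoint C ∧ B ⊆ C := by
  obtain ⟨C, hBC, hC⟩ := zorn_subset_nonempty {B : Set L | IsFilterBase B}
    (fun S hS hchain hne ↦ ⟨⋃₀ S, sUnion_of_isChain hne hchain fun _ hD ↦ hS hD,
      fun _ ↦ Set.subset_sUnion_of_mem⟩) B hB
  exact ⟨C, ⟨hC.prop, fun _ hD hCD ↦ (hC.eq_of_subset hD hCD).symm⟩, hBC⟩

end PartialOrder

theorem setOf_inf_le {L : Type*} [SemilatticeInf L] [OrderBot L] {B : Set L} {a : L}
    (hB : IsFilterBase B) (ha : ∀ b ∈ B, ¬Disjoint a b) :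
    IsFilterBase {x | ∃ b ∈ B, a ⊓ b ≤ x} := by
  refine ⟨?_, ?_, ?_⟩
  · obtain ⟨b, hb⟩ := hB.1
    exact ⟨a ⊓ b, b, hb, le_rfl⟩
  · rintro ⟨b, hb, hab⟩
    exact ha b hb (disjoint_iff_inf_le.2 hab)
  · rintro x ⟨b, hb, hx⟩ y ⟨c, hc, hy⟩
    obtain ⟨d, hd, hdb, hdc⟩ := hB.2.2 b hb c hc
    exact ⟨a ⊓ d, ⟨d, hd, le_rfl⟩, (inf_le_inf_left a hdb).trans hx,
      (inf_le_inf_left a hdc).trans hy⟩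

end IsFilterBase

namespace IsQuasipoint

variable {L : Type*} [SemilatticeInf L] [OrderBot L] {B : Set L} {a b : L}

theorem exists_mem_disjoint (hB : IsQuasipoint B) (ha : a ∉ B) : ∃ b ∈ B, Disjoint a b := by
  by_contra! h
  have hext : {x | ∃ b ∈ B, a ⊓ b ≤ x} = B :=
    hB.2 _ (hB.1.setOf_inf_le h) fun b hb ↦ ⟨b, hb, inf_le_right⟩
  obtain ⟨b, hb⟩ := hB.1.1
  exact ha (hext ▸ ⟨b, hb, inf_le_left⟩)

theorem exists_mem_disjoint_disjoint (hB : IsQuasipoint B) (ha : a ∉ B) (hb : b ∉ B) :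
    ∃ c ∈ B, Disjoint c a ∧ Disjoint c b := by
  obtain ⟨x, hx, hax⟩ := hB.exists_mem_disjoint ha
  obtain ⟨y, hy, hby⟩ := hB.exists_mem_disjoint hb
  obtain ⟨c, hc, hcx, hcy⟩ := hB.1.2.2 x hx y hy
  exact ⟨c, hc, hax.symm.mono_left hcx, hby.symm.mono_left hcy⟩

theorem isUpperSet (hB : IsQuasipoint B) : IsUpperSet B := by
  intro a b hab ha
  by_contra hb
  obtain ⟨c, hc, hbc⟩ := hB.exists_mem_disjoint hb
  exact hB.1.not_disjoint_s2 ha hc (hbc.mono_left hab)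

end IsQuasipoint

theorem qset_nonempty {L : Type*} [PartialOrder L] [OrderBot L] {a : L} (ha : a ≠ ⊥) :
    (Qset a).Nonempty := by
  obtain ⟨B, hB, haB⟩ := (IsFilterBase.singleton ha).exists_isQuasipoint_superset
  exact ⟨⟨B, hB⟩, haB rfl⟩

theorem qset_mono {L : Type*} [SemilatticeInf L] [OrderBot L] :
    Monotone (Qset : L → Set (Quasipoint L)) :=
  fun _ _ hab B ↦ B.2.isUpperSet hab

theorem qset_top {L : Type*} [SemilatticeInf L] [BoundedOrder L] :
    Qset (⊤ : L) = Set.univ :=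
  Set.eq_univ_of_forall fun B ↦ B.2.isUpperSet.top_mem.2 B.2.1.1

theorem qset_subset_union_iff {L : Type*} [SemilatticeInf L] [OrderBot L] {a b c : L} :
    Qset c ⊆ Qset a ∪ Qset b ↔ ∀ x, Disjoint x a → Disjoint x b → Disjoint x c := by
  constructor
  · intro hcover x hxa hxb
    by_contra hxc
    obtain ⟨B, hB⟩ := qset_nonempty (mt disjoint_iff.2 hxc)
    have hx : x ∈ B.1 := qset_mono inf_le_left hB
    have hc : B ∈ Qset c := qset_mono inf_le_right hB
    rcases hcover hc with ha | hb
    · exact B.2.1.not_disjoint_s2 hx ha hxa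
    · exact B.2.1.not_disjoint_s2 hx hb hxb
  · intro hdisj B hc
    by_contra hab
    obtain ⟨ha, hb⟩ := not_or.1 hab
    obtain ⟨x, hx, hxa, hxb⟩ := B.2.exists_mem_disjoint_disjoint ha hb
    exact B.2.1.not_disjoint_s2 hx hc (hdisj x hxa hxb)

theorem qset_union_eq_univ_iff {L : Type*} [SemilatticeInf L] [BoundedOrder L] {a b : L} :
    Qset a ∪ Qset b = Set.univ ↔ ∀ x, Disjoint x a → Disjoint x b → x = ⊥ := by
  rw [← Set.univ_subset_iff, ← qset_top, qset_subset_union_iff]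
  simp only [disjoint_top]

/-- 0-distributivity: the elements disjoint from a given one are closed under binary joins.
Unlike distributivity, this constrains only meets equal to `⊥`. -/
def IsZeroDistributive (L : Type*) [Lattice L] [OrderBot L] : Prop :=
  ∀ ⦃x a b : L⦄, Disjoint x a → Disjoint x b → Disjoint x (a ⊔ b)

theorem forall_qset_union_eq_qset_sup_iff {L : Type*} [Lattice L] [OrderBot L] :
    (∀ a b : L, Qset a ∪ Qset b = Qset (a ⊔ b)) ↔ IsZeroDistributive L := by
  have hunion (a b : L) : Qset a ∪ Qset b ⊆ Qset (a ⊔ b) :=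
    Set.union_subset (qset_mono le_sup_left) (qset_mono le_sup_right)
  constructor
  · intro h x a b
    exact qset_subset_union_iff.1 (h a b).ge x
  · intro h a b
    exact (hunion a b).antisymm (qset_subset_union_iff.2 fun _ ↦ @h _ a b)

theorem isZeroDistributive_of_inf_sup_left {L : Type*} [Lattice L] [OrderBot L]
    (h : ∀ a b c : L, a ⊓ (b ⊔ c) = (a ⊓ b) ⊔ (a ⊓ c)) : IsZeroDistributive L := by
  intro x a b hxa hxb
  rw [disjoint_iff, h, hxa.eq_bot, hxb.eq_bot, sup_idem]

/-- A choice, for each `a`, of an element `oc a` disjoint from `a` that witnesses section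
semicomplementedness: every `b > a` has nonzero meet with `oc a`. Besides orthocomplementation in an
orthomodular lattice, any choice of complements in a complemented modular lattice is an example. -/
structure IsSectionSemicomplement {L : Type*} [PartialOrder L] [OrderBot L] (oc : L → L) :
    Prop where
  disjoint (a : L) : Disjoint a (oc a)
  eq_of_le_of_disjoint ⦃a b : L⦄ : a ≤ b → Disjoint b (oc a) → a = b

namespace IsSectionSemicomplement

variable {L : Type*} [Lattice L] [OrderBot L] {oc : L → L}

theorem inf_sup_left_of_isZeroDistributive (hoc : IsSectionSemicomplement oc)
    (hL : IsZeroDistributive L) (a b c : L) : a ⊓ (b ⊔ c) = (a ⊓ b) ⊔ (a ⊓ c) := by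
  set y := (a ⊓ b) ⊔ (a ⊓ c)
  have disjoint_of_inf_le {d : L} (hd : a ⊓ d ≤ y) : Disjoint (a ⊓ (b ⊔ c) ⊓ oc y) d := by
    refine disjoint_iff_inf_le.2 ((hoc.disjoint y).le_bot.trans' (le_inf ?_ ?_))
    · exact (inf_le_inf_right d (inf_le_left.trans inf_le_left)).trans hd
    · exact inf_le_left.trans inf_le_right
  have hdisj : Disjoint (a ⊓ (b ⊔ c) ⊓ oc y) (b ⊔ c) :=
    hL (disjoint_of_inf_le le_sup_left) (disjoint_of_inf_le le_sup_right)
  refine (hoc.eq_of_le_of_disjoint le_inf_sup (disjoint_iff.2 ?_)).symm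
  exact hdisj.eq_bot_of_le (inf_le_left.trans inf_le_right)

theorem eq_bot_of_isZeroDistributive (hoc : IsSectionSemicomplement oc)
    (hL : IsZeroDistributive L) {a x : L} (hxa : Disjoint x a) (hxoc : Disjoint x (oc a)) :
    x = ⊥ := by
  have hsup : Disjoint (a ⊔ x) (oc a) := (hL (hoc.disjoint a).symm hxoc.symm).symm
  have hx : x ≤ a := left_eq_sup.1 (hoc.eq_of_le_of_disjoint le_sup_left hsup)
  exact hxa.eq_bot_of_le hx

theorem le_of_disjoint (hoc : IsSectionSemicomplement oc)
    (hbot : ∀ a x, Disjoint x a → Disjoint x (oc a) → x = ⊥) {a b : L} (hab : Disjoint a b) :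
    b ≤ oc a := by
  refine inf_eq_left.1 (hoc.eq_of_le_of_disjoint inf_le_left (disjoint_iff.2 ?_))
  refine hbot a _ (hab.symm.mono_left inf_le_left) (disjoint_iff_inf_le.2 ?_)
  rw [inf_right_comm]
  exact (hoc.disjoint (b ⊓ oc a)).le_bot

theorem isZeroDistributive_iff (hoc : IsSectionSemicomplement oc) :
    IsZeroDistributive L ↔ ∀ a x, Disjoint x a → Disjoint x (oc a) → x = ⊥ := by
  constructor
  · intro hL a x
    exact hoc.eq_bot_of_isZeroDistributive hL
  · intro hbot x a b hxa hxb
    exact (hoc.disjoint x).mono_right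
      (sup_le (hoc.le_of_disjoint hbot hxa) (hoc.le_of_disjoint hbot hxb))

end IsSectionSemicomplement

theorem isSectionSemicomplement_of_orthomodular {L : Type*} [Lattice L] [BoundedOrder L]
    {oc : L → L} (h_inf_compl : ∀ a : L, a ⊓ oc a = ⊥) (h_sup_compl : ∀ a : L, a ⊔ oc a = ⊤)
    (h_compl_inf : ∀ a b : L, oc (a ⊓ b) = oc a ⊔ oc b) (h_compl_compl : ∀ a : L, oc (oc a) = a)
    (h_orthomodular : ∀ a b : L, b ≤ a → b = a ⊓ (oc a ⊔ b)) : IsSectionSemicomplement oc where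
  disjoint a := disjoint_iff.2 (h_inf_compl a)
  eq_of_le_of_disjoint a b hab hdisj := by
    have hsup : oc b ⊔ a = ⊤ := calc
      oc b ⊔ a = oc (b ⊓ oc a) := by rw [h_compl_inf, h_compl_compl]
      _ = ⊥ ⊔ oc ⊥ := by rw [hdisj.eq_bot, bot_sup_eq]
      _ = ⊤ := h_sup_compl ⊥
    rw [h_orthomodular b a hab, hsup, inf_top_eq]

theorem orthomodular_distributive_tfae_general {L : Type*} [Lattice L] [BoundedOrder L]
    {oc : L → L} (hoc : IsSectionSemicomplement oc) :
    List.TFAE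
      [ ∀ a b c : L, a ⊓ (b ⊔ c) = (a ⊓ b) ⊔ (a ⊓ c),
        ∀ a b : L, Qset a ∪ Qset b = Qset (a ⊔ b),
        ∀ a : L, Qset a ∪ Qset (oc a) = (Set.univ : Set (Quasipoint L)) ] := by
  simp only [forall_qset_union_eq_qset_sup_iff, qset_union_eq_univ_iff]
  tfae_have 1 → 2 := isZeroDistributive_of_inf_sup_left
  tfae_have 2 → 1 := hoc.inf_sup_left_of_isZeroDistributive
  tfae_have 2 ↔ 3 := hoc.isZeroDistributive_iff
  tfae_finish

/-- For an orthomodular lattice `L` the following are equivalent: (i) `L` is distributive;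
(ii) `Qset a ∪ Qset b = Qset (a ⊔ b)` for all `a, b` (every quasipoint containing `a ⊔ b`
contains `a` or `b`); (iii) `Qset a ∪ Qset (oc a) = Q(L)` for every `a` (every quasipoint
contains `a` or `oc a`). -/
theorem orthomodular_distributive_tfae {L : Type*} [Lattice L] [BoundedOrder L]
    (oc : L → L)
    (h_inf_compl : ∀ a : L, a ⊓ oc a = ⊥)
    (h_sup_compl : ∀ a : L, a ⊔ oc a = ⊤)
    (h_compl_inf : ∀ a b : L, oc (a ⊓ b) = oc a ⊔ oc b)
    (h_compl_sup : ∀ a b : L, oc (a ⊔ b) = oc a ⊓ oc b)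
    (h_compl_compl : ∀ a : L, oc (oc a) = a)
    (h_orthomodular : ∀ a b : L, b ≤ a → b = a ⊓ (oc a ⊔ b)) :
    List.TFAE
      [ ∀ a b c : L, a ⊓ (b ⊔ c) = (a ⊓ b) ⊔ (a ⊓ c),
        ∀ a b : L, Qset a ∪ Qset b = Qset (a ⊔ b),
        ∀ a : L, Qset a ∪ Qset (oc a) = (Set.univ : Set (Quasipoint L)) ] :=
  orthomodular_distributive_tfae_general <| isSectionSemicomplement_of_orthomodular
    h_inf_compl h_sup_compl h_compl_inf h_compl_compl h_orthomodular
end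

section
/- (Nakamura) Let L be an orthocomplemented lattice. The commutativity relation C, defined by a C b iff a = (a ∧ b) ∨ (a ∧ b⊥), is symmetric (i.e. a C b implies b C a for all a, b ∈ L) if and only if L is orthomodular (i.e. b ≤ a implies b = a ∧ (a⊥ ∨ b) for all a, b ∈ L). -/
/-!
If `b ≤ a` then `b` commutes with `a`, and `a` commutes with `b` exactly when
`a = b ⊔ (a ⊓ oc b)`, which is the complement of the orthomodular law for `oc a ≤ oc b`.
So symmetry of commutativity gives orthomodularity. Conversely, orthomodularity at `b ⊓ a ≤ b`
gives `b = (b ⊓ a) ⊔ (b ⊓ oc (b ⊓ a))`, and when `a` commutes with `b`, the complement of the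
commutation identity collapses `b ⊓ oc (b ⊓ a)` to `b ⊓ oc a` by absorption.
-/

section Definitions

variable {L : Type*} [Lattice L]

/-- The commutativity relation `a C b` of orthocomplemented lattices. The complementation is
encoded as an arbitrary map `oc`, with no complement laws built in. -/
def OrthoCommutes (oc : L → L) (a b : L) : Prop :=
  a = (a ⊓ b) ⊔ (a ⊓ oc b)

/-- The orthomodular law for a lattice with complementation `oc`, again an arbitrary map. -/
def IsOrthomodular (oc : L → L) : Prop :=
  ∀ a b : L, b ≤ a → b = a ⊓ (oc a ⊔ b)

end Definitions

section DeMorgan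

theorem antitone_of_map_inf {α β : Type*} [SemilatticeInf α] [SemilatticeSup β] {f : α → β}
    (h_inf : ∀ a b, f (a ⊓ b) = f a ⊔ f b) : Antitone f := by
  intro a b hab
  calc f b ≤ f a ⊔ f b := le_sup_right
    _ = f (a ⊓ b) := (h_inf a b).symm
    _ = f a := by rw [inf_eq_left.mpr hab]

variable {L : Type*} [Lattice L] {oc : L → L}

theorem map_sup_of_antitone_of_involutive (h_anti : Antitone oc) (h_inv : oc.Involutive)
    (a b : L) : oc (a ⊔ b) = oc a ⊓ oc b := by
  refine le_antisymm (le_inf (h_anti le_sup_left) (h_anti le_sup_right)) ?_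
  have ha : a ≤ oc (oc a ⊓ oc b) := (h_inv a).ge.trans (h_anti inf_le_left)
  have hb : b ≤ oc (oc a ⊓ oc b) := (h_inv b).ge.trans (h_anti inf_le_right)
  exact (h_inv _).ge.trans (h_anti (sup_le ha hb))

theorem map_inf_of_antitone_of_involutive (h_anti : Antitone oc) (h_inv : oc.Involutive)
    (a b : L) : oc (a ⊓ b) = oc a ⊔ oc b := by
  rw [← h_inv (oc a ⊔ oc b), map_sup_of_antitone_of_involutive h_anti h_inv, h_inv, h_inv]

end DeMorgan

section Commutativity

variable {L : Type*} [Lattice L] {oc : L → L} {a b : L}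

theorem orthoCommutes_of_le (hab : a ≤ b) : OrthoCommutes oc a b := by
  rw [OrthoCommutes, inf_eq_left.mpr hab, sup_inf_self]

theorem orthoCommutes_iff_eq_sup_of_le (hba : b ≤ a) :
    OrthoCommutes oc a b ↔ a = b ⊔ (a ⊓ oc b) := by
  rw [OrthoCommutes, inf_eq_right.mpr hba]

theorem OrthoCommutes.map_eq (h_anti : Antitone oc) (h_inv : oc.Involutive)
    (hab : OrthoCommutes oc a b) : oc a = (oc a ⊔ oc b) ⊓ (oc a ⊔ b) := by
  calc oc a = oc ((a ⊓ b) ⊔ (a ⊓ oc b)) := congrArg oc hab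
    _ = (oc a ⊔ oc b) ⊓ (oc a ⊔ b) := by
      simp only [map_sup_of_antitone_of_involutive h_anti h_inv,
        map_inf_of_antitone_of_involutive h_anti h_inv, h_inv b]

theorem OrthoCommutes.inf_map_inf (h_anti : Antitone oc) (h_inv : oc.Involutive)
    (hab : OrthoCommutes oc a b) : b ⊓ oc (b ⊓ a) = b ⊓ oc a := by
  calc b ⊓ oc (b ⊓ a) = b ⊓ (oc a ⊔ oc b) := by
        rw [map_inf_of_antitone_of_involutive h_anti h_inv, sup_comm]
    _ = (b ⊓ (oc a ⊔ b)) ⊓ (oc a ⊔ oc b) := by rw [inf_eq_left.mpr (le_sup_right : b ≤ oc a ⊔ b)]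
    _ = b ⊓ ((oc a ⊔ oc b) ⊓ (oc a ⊔ b)) := by rw [inf_assoc, inf_comm (oc a ⊔ b)]
    _ = b ⊓ oc a := by rw [← hab.map_eq h_anti h_inv]

theorem isOrthomodular_iff_eq_sup (h_anti : Antitone oc) (h_inv : oc.Involutive) :
    IsOrthomodular oc ↔ ∀ a b : L, b ≤ a → a = b ⊔ (a ⊓ oc b) := by
  have map_sup := map_sup_of_antitone_of_involutive h_anti h_inv
  have map_inf := map_inf_of_antitone_of_involutive h_anti h_inv
  constructor
  · intro h a b hba
    calc a = oc (oc a) := (h_inv a).symm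
      _ = oc (oc b ⊓ (oc (oc b) ⊔ oc a)) := congrArg oc (h (oc b) (oc a) (h_anti hba))
      _ = b ⊔ (a ⊓ oc b) := by rw [map_inf, map_sup, h_inv, h_inv, inf_comm]
  · intro h a b hba
    calc b = oc (oc b) := (h_inv b).symm
      _ = oc (oc a ⊔ (oc b ⊓ oc (oc a))) := congrArg oc (h (oc b) (oc a) (h_anti hba))
      _ = a ⊓ (oc a ⊔ b) := by rw [map_sup, map_inf, h_inv, h_inv, sup_comm]

theorem isOrthomodular_of_symmetric (h_anti : Antitone oc) (h_inv : oc.Involutive)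
    (h_symm : ∀ a b, OrthoCommutes oc a b → OrthoCommutes oc b a) : IsOrthomodular oc :=
  (isOrthomodular_iff_eq_sup h_anti h_inv).mpr fun a b hba =>
    (orthoCommutes_iff_eq_sup_of_le hba).mp (h_symm b a (orthoCommutes_of_le hba))

theorem OrthoCommutes.symm_of_isOrthomodular (h_anti : Antitone oc) (h_inv : oc.Involutive)
    (h_om : IsOrthomodular oc) (hab : OrthoCommutes oc a b) : OrthoCommutes oc b a := by
  calc b = (b ⊓ a) ⊔ (b ⊓ oc (b ⊓ a)) :=
        (isOrthomodular_iff_eq_sup h_anti h_inv).mp h_om b (b ⊓ a) inf_le_left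
    _ = (b ⊓ a) ⊔ (b ⊓ oc a) := by rw [hab.inf_map_inf h_anti h_inv]

end Commutativity

theorem commutes_symmetric_iff_orthomodular_general {L : Type*} [Lattice L] {oc : L → L}
    (h_anti : Antitone oc) (h_inv : oc.Involutive) :
    (∀ a b, OrthoCommutes oc a b → OrthoCommutes oc b a) ↔ IsOrthomodular oc :=
  ⟨isOrthomodular_of_symmetric h_anti h_inv,
    fun h_om _ _ hab => hab.symm_of_isOrthomodular h_anti h_inv h_om⟩

/-- **Nakamura's theorem.** In an orthocomplemented lattice `L`, the commutativity relation
`a C b :↔ a = (a ⊓ b) ⊔ (a ⊓ bᗮ)` is symmetric if and only if `L` is orthomodular. -/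
theorem commutes_symmetric_iff_orthomodular {L : Type*} [Lattice L] [BoundedOrder L]
    (oc : L → L)
    (h_inf_compl : ∀ a : L, a ⊓ oc a = ⊥)
    (h_sup_compl : ∀ a : L, a ⊔ oc a = ⊤)
    (h_compl_inf : ∀ a b : L, oc (a ⊓ b) = oc a ⊔ oc b)
    (h_compl_sup : ∀ a b : L, oc (a ⊔ b) = oc a ⊓ oc b)
    (h_compl_compl : ∀ a : L, oc (oc a) = a) :
    (∀ a b : L, a = (a ⊓ b) ⊔ (a ⊓ oc b) → b = (b ⊓ a) ⊔ (b ⊓ oc a)) ↔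
      (∀ a b : L, b ≤ a → b = a ⊓ (oc a ⊔ b)) :=
  commutes_symmetric_iff_orthomodular_general (antitone_of_map_inf h_compl_inf) h_compl_compl
end

section
/- Let L be a complete orthomodular lattice and let M ⊆ L be a sub-ortholattice (a subset containing 0 and 1 and closed under ∧, ∨ and the orthocomplement ⊥). Then: (i) M is distributive (as a lattice) if and only if M ⊆ M^C; (ii) M is a maximal distributive sub-ortholattice of L if and only if M = M^C; (iii) every maximal distributive sub-ortholattice of L is complete, i.e. closed under arbitrary suprema and infima computed in L. -/
/-- In an orthocomplemented lattice, `a` commutes with `b` if `a = (a ⊓ b) ⊔ (a ⊓ bᗮ)`. -/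
def OCommutes {L : Type*} [Lattice L] (oc : L → L) (a b : L) : Prop :=
  a = (a ⊓ b) ⊔ (a ⊓ oc b)

/-- The commutant of a subset `M` of an orthocomplemented lattice. -/
def OCommutant {L : Type*} [Lattice L] (oc : L → L) (M : Set L) : Set L :=
  {b | ∀ a ∈ M, OCommutes oc a b}

/-- A sub-ortholattice: a subset containing `⊥` and `⊤`, closed under meet, join and the
orthocomplement. -/
def IsSubOrtholattice {L : Type*} [Lattice L] [BoundedOrder L] (oc : L → L) (M : Set L) : Prop :=
  ⊥ ∈ M ∧ ⊤ ∈ M ∧ (∀ a ∈ M, ∀ b ∈ M, a ⊓ b ∈ M) ∧ (∀ a ∈ M, ∀ b ∈ M, a ⊔ b ∈ M) ∧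
    ∀ a ∈ M, oc a ∈ M

/-- A subset is distributive (as a sublattice) if the distributive law holds for its elements. -/
def IsDistribSubset {L : Type*} [Lattice L] (M : Set L) : Prop :=
  ∀ a ∈ M, ∀ b ∈ M, ∀ c ∈ M, a ⊓ (b ⊔ c) = (a ⊓ b) ⊔ (a ⊓ c)

/-- A maximal distributive sub-ortholattice: distributive and not properly contained in any
distributive sub-ortholattice. -/
def IsMaxDistribSubOrtholattice {L : Type*} [Lattice L] [BoundedOrder L]
    (oc : L → L) (M : Set L) : Prop :=
  IsSubOrtholattice oc M ∧ IsDistribSubset M ∧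
    ∀ N : Set L, IsSubOrtholattice oc N → IsDistribSubset N → M ⊆ N → N = M

/-!
Commutation in an orthomodular lattice is symmetric, so `M ⊆ Mᶜᶜ` for every `M`, and every
commutant `Mᶜ` is a sub-ortholattice closed under all existing suprema and infima.
If `N` consists of pairwise commuting elements, then so does `Nᶜᶜ`: from `N ⊆ Nᶜ` one gets
`Nᶜᶜ ⊆ Nᶜ ⊆ Nᶜᶜᶜ`. As pairwise commuting elements distribute, `Nᶜᶜ` is then a distributive
sub-ortholattice containing `N`. Taking `N = M ∪ {x}` with `M` maximal distributive and `x ∈ Mᶜ`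
forces `x ∈ M`.
-/

section Orthomodular

variable {L : Type*} [Lattice L]

namespace OCommutes

variable {oc : L → L} {a b : L}

theorem refl (oc : L → L) (a : L) : OCommutes oc a a := by
  rw [OCommutes, inf_idem, sup_inf_self]

theorem le_compl_sup_inf (h : OCommutes oc b a) : b ≤ oc a ⊔ (a ⊓ b) :=
  calc
    b = (b ⊓ a) ⊔ (b ⊓ oc a) := h
    _ ≤ oc a ⊔ (a ⊓ b) := sup_le (inf_comm b a ▸ le_sup_right) (inf_le_right.trans le_sup_left)

theorem of_isLUB {S : Set L} {s : L} (hs : IsLUB S s) (h : ∀ b ∈ S, OCommutes oc b a) :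
    OCommutes oc s a := by
  refine le_antisymm (hs.2 fun b hb => ?_) (sup_le inf_le_left inf_le_left)
  calc
    b = (b ⊓ a) ⊔ (b ⊓ oc a) := h b hb
    _ ≤ (s ⊓ a) ⊔ (s ⊓ oc a) :=
      sup_le_sup (inf_le_inf_right a (hs.1 hb)) (inf_le_inf_right (oc a) (hs.1 hb))

end OCommutes

theorem oCommutant_anti {oc : L → L} {S T : Set L} (h : S ⊆ T) :
    OCommutant oc T ⊆ OCommutant oc S :=
  fun _ hb a ha => hb a (h ha)

variable [BoundedOrder L]

/-- `oc` is an orthocomplementation, i.e. makes the bounded lattice `L` an orthocomplemented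
lattice. It is a predicate on `oc`, rather than a class, since the notions above take `oc` as an
explicit argument. -/
structure IsOrthocomplementation (oc : L → L) : Prop where
  inf_compl (a : L) : a ⊓ oc a = ⊥
  sup_compl (a : L) : a ⊔ oc a = ⊤
  compl_inf (a b : L) : oc (a ⊓ b) = oc a ⊔ oc b
  compl_sup (a b : L) : oc (a ⊔ b) = oc a ⊓ oc b
  compl_compl (a : L) : oc (oc a) = a

/-- `oc` is an orthocomplementation that makes `L` an orthomodular lattice. -/
structure IsOrthomodular_s5 (oc : L → L) : Prop extends IsOrthocomplementation oc where
  eq_inf_compl_sup (a b : L) : b ≤ a → b = a ⊓ (oc a ⊔ b)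

variable {oc : L → L}

namespace IsOrthocomplementation

theorem antitone (h : IsOrthocomplementation oc) : Antitone oc := fun a b hab =>
  calc
    oc b = oc (a ⊔ b) := by rw [sup_eq_right.2 hab]
    _ = oc a ⊓ oc b := h.compl_sup a b
    _ ≤ oc a := inf_le_left

theorem compl_le_of_compl_le (h : IsOrthocomplementation oc) {a b : L} (hab : oc a ≤ b) :
    oc b ≤ a :=
  h.compl_compl a ▸ h.antitone hab

theorem isLUB_image_compl (h : IsOrthocomplementation oc) {S : Set L} {s : L} (hs : IsGLB S s) :
    IsLUB (oc '' S) (oc s) := by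
  refine ⟨h.antitone.mem_upperBounds_image hs.1, fun u hu => ?_⟩
  refine h.compl_le_of_compl_le (hs.2 fun b hb => ?_)
  exact h.compl_le_of_compl_le (hu (Set.mem_image_of_mem oc hb))

theorem oCommutes_compl_right (h : IsOrthocomplementation oc) {a b : L} (hab : OCommutes oc a b) :
    OCommutes oc a (oc b) := by
  rwa [OCommutes, h.compl_compl, sup_comm]

theorem compl_mem_oCommutant (h : IsOrthocomplementation oc) {M : Set L} {b : L}
    (hb : b ∈ OCommutant oc M) : oc b ∈ OCommutant oc M :=
  fun a ha => h.oCommutes_compl_right (hb a ha)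

theorem subset_oCommutant_of_isDistribSubset (h : IsOrthocomplementation oc) {M : Set L}
    (hM : ∀ a ∈ M, oc a ∈ M) (hd : IsDistribSubset M) : M ⊆ OCommutant oc M := fun b hb a ha =>
  calc
    a = a ⊓ (b ⊔ oc b) := by rw [h.sup_compl, inf_top_eq]
    _ = (a ⊓ b) ⊔ (a ⊓ oc b) := hd a ha b hb (oc b) (hM b hb)

end IsOrthocomplementation

namespace IsOrthomodular_s5

theorem eq_sup_inf_compl (h : IsOrthomodular_s5 oc) {a b : L} (hab : a ≤ b) :
    b = a ⊔ (b ⊓ oc a) :=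
  calc
    b = oc (oc b) := (h.compl_compl b).symm
    _ = oc (oc a ⊓ (oc (oc a) ⊔ oc b)) :=
      congrArg oc (h.eq_inf_compl_sup (oc a) (oc b) (h.antitone hab))
    _ = a ⊔ (b ⊓ oc a) := by
      rw [h.compl_inf, h.compl_sup, h.compl_compl, h.compl_compl, inf_comm]

theorem oCommutes_symm (h : IsOrthomodular_s5 oc) {a b : L} (hab : OCommutes oc a b) :
    OCommutes oc b a := by
  have compl_eq : oc a = oc (a ⊓ b) ⊓ (oc a ⊔ b) :=
    calc
      oc a = oc ((a ⊓ b) ⊔ (a ⊓ oc b)) := congrArg oc hab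
      _ = oc (a ⊓ b) ⊓ (oc a ⊔ b) := by rw [h.compl_sup, h.compl_inf a (oc b), h.compl_compl]
  have inf_compl_eq : b ⊓ oc (b ⊓ a) = b ⊓ oc a :=
    calc
      b ⊓ oc (b ⊓ a) = oc (a ⊓ b) ⊓ ((oc a ⊔ b) ⊓ b) := by
        rw [inf_eq_right.2 (le_sup_right : b ≤ oc a ⊔ b), inf_comm b a, inf_comm]
      _ = b ⊓ oc a := by rw [← inf_assoc, ← compl_eq, inf_comm]
  calc
    b = (b ⊓ a) ⊔ (b ⊓ oc (b ⊓ a)) := h.eq_sup_inf_compl inf_le_left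
    _ = (b ⊓ a) ⊔ (b ⊓ oc a) := by rw [inf_compl_eq]

theorem inf_sup_left_of_oCommutes (h : IsOrthomodular_s5 oc) {a b c : L}
    (hb : OCommutes oc b a) (hc : OCommutes oc c a) : a ⊓ (b ⊔ c) = (a ⊓ b) ⊔ (a ⊓ c) := by
  refine le_antisymm ?_ le_inf_sup
  have sup_le_compl_sup : b ⊔ c ≤ oc a ⊔ ((a ⊓ b) ⊔ (a ⊓ c)) :=
    sup_le (hb.le_compl_sup_inf.trans (sup_le_sup_left le_sup_left (oc a)))
      (hc.le_compl_sup_inf.trans (sup_le_sup_left le_sup_right (oc a)))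
  calc
    a ⊓ (b ⊔ c) ≤ a ⊓ (oc a ⊔ ((a ⊓ b) ⊔ (a ⊓ c))) := inf_le_inf_left a sup_le_compl_sup
    _ = (a ⊓ b) ⊔ (a ⊓ c) := (h.eq_inf_compl_sup _ _ (sup_le inf_le_left inf_le_left)).symm

variable {M N S : Set L} {s x : L}

theorem isDistribSubset_of_subset_oCommutant (h : IsOrthomodular_s5 oc)
    (hM : M ⊆ OCommutant oc M) : IsDistribSubset M :=
  fun _ ha _ hb _ hc => h.inf_sup_left_of_oCommutes (hM ha _ hb) (hM ha _ hc)

theorem isDistribSubset_iff_subset_oCommutant (h : IsOrthomodular_s5 oc)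
    (hM : ∀ a ∈ M, oc a ∈ M) : IsDistribSubset M ↔ M ⊆ OCommutant oc M :=
  ⟨h.subset_oCommutant_of_isDistribSubset hM, h.isDistribSubset_of_subset_oCommutant⟩

theorem isLUB_mem_oCommutant (h : IsOrthomodular_s5 oc) (hS : S ⊆ OCommutant oc M)
    (hs : IsLUB S s) : s ∈ OCommutant oc M :=
  fun a ha => h.oCommutes_symm (.of_isLUB hs fun _ hb => h.oCommutes_symm (hS hb a ha))

theorem isGLB_mem_oCommutant (h : IsOrthomodular_s5 oc) (hS : S ⊆ OCommutant oc M)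
    (hs : IsGLB S s) : s ∈ OCommutant oc M := by
  have image_subset : oc '' S ⊆ OCommutant oc M :=
    Set.image_subset_iff.2 fun _ hb => h.compl_mem_oCommutant (hS hb)
  have compl_mem : oc s ∈ OCommutant oc M :=
    h.isLUB_mem_oCommutant image_subset (h.isLUB_image_compl hs)
  exact h.compl_compl s ▸ h.compl_mem_oCommutant compl_mem

theorem isSubOrtholattice_oCommutant (h : IsOrthomodular_s5 oc) (M : Set L) :
    IsSubOrtholattice oc (OCommutant oc M) :=
  ⟨h.isLUB_mem_oCommutant (Set.empty_subset _) isLUB_empty,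
    h.isGLB_mem_oCommutant (Set.empty_subset _) isGLB_empty,
    fun _ ha _ hb => h.isGLB_mem_oCommutant (Set.pair_subset ha hb) isGLB_pair,
    fun _ ha _ hb => h.isLUB_mem_oCommutant (Set.pair_subset ha hb) isLUB_pair,
    fun _ => h.compl_mem_oCommutant⟩

theorem subset_oCommutant_oCommutant (h : IsOrthomodular_s5 oc) (M : Set L) :
    M ⊆ OCommutant oc (OCommutant oc M) :=
  fun b hb _ ha => h.oCommutes_symm (ha b hb)

theorem isDistribSubset_oCommutant_oCommutant (h : IsOrthomodular_s5 oc)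
    (hN : N ⊆ OCommutant oc N) : IsDistribSubset (OCommutant oc (OCommutant oc N)) :=
  h.isDistribSubset_of_subset_oCommutant <|
    (oCommutant_anti hN).trans (h.subset_oCommutant_oCommutant (OCommutant oc N))

theorem insert_subset_oCommutant_insert (h : IsOrthomodular_s5 oc) (hM : M ⊆ OCommutant oc M)
    (hx : x ∈ OCommutant oc M) : insert x M ⊆ OCommutant oc (insert x M) := by
  rintro b (rfl | hb) a (rfl | ha)
  · exact .refl oc a
  · exact hx a ha
  · exact h.oCommutes_symm (hx b hb)
  · exact hM hb a ha

theorem eq_oCommutant_of_isMaxDistribSubOrtholattice (h : IsOrthomodular_s5 oc)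
    (hM : IsMaxDistribSubOrtholattice oc M) : M = OCommutant oc M := by
  obtain ⟨⟨-, -, -, -, compl_mem⟩, hd, hmax⟩ := hM
  have hcomm : M ⊆ OCommutant oc M := h.subset_oCommutant_of_isDistribSubset compl_mem hd
  refine hcomm.antisymm fun x hx => ?_
  have insert_subset := h.subset_oCommutant_oCommutant (insert x M)
  have bicommutant_eq : OCommutant oc (OCommutant oc (insert x M)) = M :=
    hmax _ (h.isSubOrtholattice_oCommutant _)
      (h.isDistribSubset_oCommutant_oCommutant (h.insert_subset_oCommutant_insert hcomm hx))
      ((Set.subset_insert x M).trans insert_subset)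
  exact bicommutant_eq ▸ insert_subset (Set.mem_insert x M)

theorem isMaxDistribSubOrtholattice_of_eq_oCommutant (h : IsOrthomodular_s5 oc)
    (hM : M = OCommutant oc M) : IsMaxDistribSubOrtholattice oc M := by
  refine ⟨hM ▸ h.isSubOrtholattice_oCommutant M, h.isDistribSubset_of_subset_oCommutant hM.subset,
    fun N hN hd hMN => Set.Subset.antisymm ?_ hMN⟩
  calc
    N ⊆ OCommutant oc N := h.subset_oCommutant_of_isDistribSubset hN.2.2.2.2 hd
    _ ⊆ OCommutant oc M := oCommutant_anti hMN
    _ = M := hM.symm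

end IsOrthomodular_s5

theorem maxDistrib_iff_selfCommutant_general (h : IsOrthomodular_s5 oc) (M : Set L) :
    ((∀ a ∈ M, oc a ∈ M) → (IsDistribSubset M ↔ M ⊆ OCommutant oc M)) ∧
    (IsMaxDistribSubOrtholattice oc M ↔ M = OCommutant oc M) ∧
    (IsMaxDistribSubOrtholattice oc M →
      ∀ S ⊆ M, ∀ s, (IsLUB S s → s ∈ M) ∧ (IsGLB S s → s ∈ M)) := by
  refine ⟨h.isDistribSubset_iff_subset_oCommutant,
    ⟨h.eq_oCommutant_of_isMaxDistribSubOrtholattice,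
      h.isMaxDistribSubOrtholattice_of_eq_oCommutant⟩, fun hmax S hS s => ?_⟩
  have hM : M = OCommutant oc M := h.eq_oCommutant_of_isMaxDistribSubOrtholattice hmax
  rw [hM] at hS ⊢
  exact ⟨h.isLUB_mem_oCommutant hS, h.isGLB_mem_oCommutant hS⟩

end Orthomodular

/-- Let `L` be a complete orthomodular lattice and `M` a sub-ortholattice of `L`. Then
(i) `M` is distributive iff `M ⊆ Mᶜ`; (ii) `M` is a maximal distributive sub-ortholattice iff
`M = Mᶜ`; (iii) every maximal distributive sub-ortholattice is complete, i.e. closed under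
arbitrary suprema and infima computed in `L`. -/
theorem maxDistrib_iff_selfCommutant {L : Type*} [CompleteLattice L]
    (oc : L → L)
    (h_inf_compl : ∀ a : L, a ⊓ oc a = ⊥)
    (h_sup_compl : ∀ a : L, a ⊔ oc a = ⊤)
    (h_compl_inf : ∀ a b : L, oc (a ⊓ b) = oc a ⊔ oc b)
    (h_compl_sup : ∀ a b : L, oc (a ⊔ b) = oc a ⊓ oc b)
    (h_compl_compl : ∀ a : L, oc (oc a) = a)
    (h_orthomodular : ∀ a b : L, b ≤ a → b = a ⊓ (oc a ⊔ b))
    (M : Set L) (hM : IsSubOrtholattice oc M) :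
    (IsDistribSubset M ↔ M ⊆ OCommutant oc M) ∧
    (IsMaxDistribSubOrtholattice oc M ↔ M = OCommutant oc M) ∧
    (IsMaxDistribSubOrtholattice oc M →
      ∀ S : Set L, S ⊆ M → sSup S ∈ M ∧ sInf S ∈ M) := by
  obtain ⟨distrib_iff, max_iff, max_complete⟩ := maxDistrib_iff_selfCommutant_general
    ⟨⟨h_inf_compl, h_sup_compl, h_compl_inf, h_compl_sup, h_compl_compl⟩, h_orthomodular⟩ M
  exact ⟨distrib_iff hM.2.2.2.2, max_iff, fun hmax S hS =>
    ⟨(max_complete hmax S hS _).1 (isLUB_sSup S), (max_complete hmax S hS _).2 (isGLB_sInf S)⟩⟩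
end

section
/- Let M be a regular Hausdorff (T3) topological space. A nonempty set p of open subsets of M is a point of the lattice T(M) of open subsets of M if and only if there exists an x ∈ M such that p = {U open in M : x ∈ U}; moreover this x is uniquely determined by p. -/
open TopologicalSpace

/-- A point of a complete lattice `L`: a nonempty subset `p` with `⊥ ∉ p`, closed under binary
meets, upward closed, and such that whenever the supremum of a set of elements belongs to `p`,
some element of that set belongs to `p`. -/
def IsLatticePoint {L : Type*} [CompleteLattice L] (p : Set L) : Prop :=
  p.Nonempty ∧ ⊥ ∉ p ∧ (∀ a ∈ p, ∀ b ∈ p, a ⊓ b ∈ p) ∧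
    (∀ a ∈ p, ∀ b : L, a ≤ b → b ∈ p) ∧
    ∀ S : Set L, sSup S ∈ p → ∃ a ∈ S, a ∈ p

/-!
A point `p` of a complete lattice is determined by its largest non-member `m = sSup pᶜ`: the
members of `p` are the elements not below `m`, and closure under meets says that `m` is prime. For
open sets, primality of `m` says that its complement is an irreducible closed set. In a sober space
this set has a unique generic point `x`, and an open set meets it, i.e. is not contained in `m`,
exactly when it contains `x`. Hausdorff spaces are sober.
-/

namespace IsLatticePoint

variable {L : Type*} [CompleteLattice L] {p : Set L}

theorem sSup_compl_notMem (hp : IsLatticePoint p) : sSup pᶜ ∉ p := by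
  have ⟨_, _, _, _, exists_mem_of_sSup_mem⟩ := hp
  intro h
  obtain ⟨a, ha, ha'⟩ := exists_mem_of_sSup_mem _ h
  exact ha ha'

theorem mem_iff_not_le_sSup_compl (hp : IsLatticePoint p) {a : L} : a ∈ p ↔ ¬a ≤ sSup pᶜ := by
  have ⟨_, _, _, mem_of_le, _⟩ := hp
  exact ⟨fun ha hle => hp.sSup_compl_notMem (mem_of_le a ha _ hle),
    fun hle => by_contra fun ha => hle (le_sSup ha)⟩

theorem infPrime_sSup_compl (hp : IsLatticePoint p) : InfPrime (sSup pᶜ) := by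
  have ⟨⟨a, ha⟩, _, inf_mem, _, _⟩ := hp
  refine ⟨fun hmax => hp.mem_iff_not_le_sSup_compl.1 ha (hmax.isTop a), fun b c hbc => ?_⟩
  contrapose! hbc
  simp only [← hp.mem_iff_not_le_sSup_compl] at hbc ⊢
  exact inf_mem b hbc.1 c hbc.2

end IsLatticePoint

section Opens

variable {M : Type*} [TopologicalSpace M]

theorem opens_not_le_iff_compl_inter_nonempty {U V : Opens M} :
    ¬U ≤ V ↔ ((V : Set M)ᶜ ∩ U).Nonempty := by
  rw [← SetLike.coe_subset_coe, ← Set.inter_compl_nonempty_iff, Set.inter_comm]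

theorem isIrreducible_compl_of_infPrime {V : Opens M} (hV : InfPrime V) :
    IsIrreducible (V : Set M)ᶜ := by
  refine ⟨Set.nonempty_compl.2 fun h => hV.ne_top (Opens.ext h), fun A B hA hB hVA hVB => ?_⟩
  lift A to Opens M using hA
  lift B to Opens M using hB
  rw [← Opens.coe_inf]
  rw [← opens_not_le_iff_compl_inter_nonempty] at hVA hVB ⊢
  exact hV.inf_le.not.2 (not_or.2 ⟨hVA, hVB⟩)

theorem isLatticePoint_setOf_mem (x : M) : IsLatticePoint {U : Opens M | x ∈ U} :=
  ⟨⟨⊤, Opens.mem_top x⟩, id, fun _ hU _ hV => ⟨hU, hV⟩, fun _ hU _ hUV => hUV hU,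
    fun _ => Opens.mem_sSup.1⟩

theorem setOf_mem_opens_injective [T0Space M] :
    Function.Injective fun x : M => {U : Opens M | x ∈ U} := fun _ _ h =>
  (inseparable_iff_forall_isOpen.2 fun U hU => Set.ext_iff.1 h ⟨U, hU⟩).eq

theorem IsLatticePoint.exists_eq_setOf_mem [QuasiSober M] {p : Set (Opens M)}
    (hp : IsLatticePoint p) : ∃ x : M, p = {U : Opens M | x ∈ U} := by
  obtain ⟨x, hx⟩ := QuasiSober.sober (isIrreducible_compl_of_infPrime hp.infPrime_sSup_compl)
    (sSup pᶜ).isOpen.isClosed_compl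
  refine ⟨x, Set.ext fun U => ?_⟩
  calc
    U ∈ p ↔ ¬U ≤ sSup pᶜ := hp.mem_iff_not_le_sSup_compl
    _ ↔ (((sSup pᶜ : Opens M) : Set M)ᶜ ∩ U).Nonempty := opens_not_le_iff_compl_inter_nonempty
    _ ↔ x ∈ U := (hx.mem_open_set_iff U.isOpen).symm

end Opens

theorem latticePoint_opens_iff_neighbourhoods_general {M : Type*} [TopologicalSpace M] [T0Space M]
    [QuasiSober M] (p : Set (Opens M)) :
    IsLatticePoint p ↔ ∃! x : M, p = {U : Opens M | x ∈ U} := by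
  constructor
  · intro hp
    obtain ⟨x, hx⟩ := hp.exists_eq_setOf_mem
    exact ⟨x, hx, fun y hy => setOf_mem_opens_injective (hy.symm.trans hx)⟩
  · rintro ⟨x, rfl, -⟩
    exact isLatticePoint_setOf_mem x

/-- For a regular Hausdorff (T3) space `M`, a nonempty collection `p` of open subsets of `M` is a
point of the lattice of open sets of `M` iff `p` is the collection of open neighbourhoods of some
(necessarily unique) `x ∈ M`. -/
theorem latticePoint_opens_iff_neighbourhoods {M : Type*} [TopologicalSpace M] [T3Space M]
    (p : Set (Opens M)) (hp : p.Nonempty) :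
    IsLatticePoint p ↔ ∃! x : M, p = {U : Opens M | x ∈ U} :=
  latticePoint_opens_iff_neighbourhoods_general p
end

section
/- Let H be a complex Hilbert space of dimension greater than one. Then the lattice L(H) of closed subspaces of H has no points: there is no nonempty set p of closed subspaces of H such that (1) the zero subspace is not in p; (2) U, V ∈ p implies U ∩ V ∈ p; (3) U ∈ p and U ⊆ V (V closed) imply V ∈ p; (4) whenever the closure of the linear span of the union of a family of closed subspaces belongs to p, some member of the family belongs to p. -/
/-!
A point of an atomistic complete lattice contains an atom, because the top element is the supremum
of the atoms. Such an atom `a` is prime with respect to binary suprema: if `a ≤ b ⊔ c`, then one of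
`b`, `c` lies in the point, and it meets `a` nontrivially. The atoms of the lattice of closed
subspaces are the lines, and in dimension greater than one no line is prime: the line through `v`
lies in the plane spanned by `w` and `v - w`, but on neither of these two lines.
-/

open Submodule

section CompleteLattice

variable {L : Type*} [CompleteLattice L] {F : Order.PFilter L} {a b c : L}

/-- A filter is completely prime if it contains a member of every family whose supremum it contains.
The completely prime filters are the points of the lattice. They do not contain `⊥`, the supremum of
the empty family. -/
def IsCompletelyPrime (F : Order.PFilter L) : Prop :=
  ∀ S : Set L, sSup S ∈ F → ∃ a ∈ S, a ∈ F

namespace IsCompletelyPrime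

theorem bot_notMem (hF : IsCompletelyPrime F) : ⊥ ∉ F := by
  intro hbot
  obtain ⟨a, ha, -⟩ := hF ∅ (by rwa [sSup_empty])
  exact ha

theorem mem_or_mem_of_sup_mem (hF : IsCompletelyPrime F) (h : b ⊔ c ∈ F) : b ∈ F ∨ c ∈ F := by
  obtain ⟨a, rfl | rfl, haF⟩ := hF {b, c} (by rwa [sSup_pair])
  · exact .inl haF
  · exact .inr haF

theorem exists_isAtom_mem [IsAtomistic L] (hF : IsCompletelyPrime F) : ∃ a, IsAtom a ∧ a ∈ F :=
  hF {a | IsAtom a} (sSup_atoms_eq_top (α := L) ▸ F.top_mem)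

theorem le_of_isAtom_of_mem (hF : IsCompletelyPrime F) (ha : IsAtom a) (haF : a ∈ F)
    (hbF : b ∈ F) : a ≤ b := by
  have hab : ¬ Disjoint a b := fun h ↦ hF.bot_notMem (h.eq_bot ▸ Order.PFilter.inf_mem haF hbF)
  exact ha.not_disjoint_iff_le.mp hab

theorem supPrime_of_isAtom_of_mem (hF : IsCompletelyPrime F) (ha : IsAtom a) (haF : a ∈ F) :
    SupPrime a :=
  ⟨fun hmin ↦ ha.ne_bot hmin.eq_bot, fun _ _ hle ↦
    (hF.mem_or_mem_of_sup_mem (Order.PFilter.mem_of_le hle haF)).imp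
      (hF.le_of_isAtom_of_mem ha haF) (hF.le_of_isAtom_of_mem ha haF)⟩

end IsCompletelyPrime

end CompleteLattice

section Rank

variable {R M : Type*} [Semiring R] [Nontrivial R] [AddCommMonoid M] [Module R M]

theorem one_lt_rank_of_linearIndependent_pair {x y : M} (h : LinearIndependent R ![x, y]) :
    1 < Module.rank R M := by
  have htwo : (2 : Cardinal) ≤ Module.rank R M := by simpa using h.cardinal_lift_le_rank
  exact Cardinal.one_lt_two.trans_le htwo

end Rank

section ClosedSubmoduleFilter

variable {R M : Type*} [Semiring R] [AddCommMonoid M] [TopologicalSpace M] [Module R M]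

/-- A set of closed subspaces satisfying the filter axioms, encoded as a set of submodules, turned
into a filter of the lattice of bundled closed submodules. -/
def closedSubmodulePFilter (p : Set (Submodule R M)) (hclosed : ∀ U ∈ p, IsClosed (U : Set M))
    (hne : p.Nonempty) (hinf : ∀ U ∈ p, ∀ V ∈ p, U ⊓ V ∈ p)
    (hup : ∀ U ∈ p, ∀ V : Submodule R M, IsClosed (V : Set M) → U ≤ V → V ∈ p) :
    Order.PFilter (ClosedSubmodule R M) :=
  Order.IsPFilter.toPFilter (F := ClosedSubmodule.toSubmodule ⁻¹' p) <| .of_def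
    (hne.elim fun U hU ↦ ⟨⟨U, hclosed U hU⟩, hU⟩)
    (fun U hU V hV ↦ ⟨U ⊓ V, hinf U hU V hV, inf_le_left, inf_le_right⟩)
    (fun {U V} hle hU ↦ hup U hU V V.isClosed hle)

theorem mem_closedSubmodulePFilter {p : Set (Submodule R M)}
    {hclosed : ∀ U ∈ p, IsClosed (U : Set M)} {hne : p.Nonempty}
    {hinf : ∀ U ∈ p, ∀ V ∈ p, U ⊓ V ∈ p}
    {hup : ∀ U ∈ p, ∀ V : Submodule R M, IsClosed (V : Set M) → U ≤ V → V ∈ p}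
    {U : ClosedSubmodule R M} :
    U ∈ closedSubmodulePFilter p hclosed hne hinf hup ↔ U.toSubmodule ∈ p :=
  Iff.rfl

theorem isCompletelyPrime_closedSubmodulePFilter [ContinuousAdd M] [ContinuousConstSMul R M]
    [T1Space M] {p : Set (Submodule R M)} (hclosed : ∀ U ∈ p, IsClosed (U : Set M))
    (hne : p.Nonempty) (hinf : ∀ U ∈ p, ∀ V ∈ p, U ⊓ V ∈ p)
    (hup : ∀ U ∈ p, ∀ V : Submodule R M, IsClosed (V : Set M) → U ≤ V → V ∈ p)
    (hsup : ∀ S : Set (Submodule R M), (∀ U ∈ S, IsClosed (U : Set M)) →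
      (sSup S).topologicalClosure ∈ p → ∃ U ∈ S, U ∈ p) :
    IsCompletelyPrime (closedSubmodulePFilter p hclosed hne hinf hup) := by
  intro S hS
  have hclosure : (sSup (ClosedSubmodule.toSubmodule '' S)).topologicalClosure ∈ p := by
    rw [sSup_image]
    exact mem_closedSubmodulePFilter.mp hS
  obtain ⟨_, ⟨U, hUS, rfl⟩, hUp⟩ :=
    hsup (ClosedSubmodule.toSubmodule '' S) (Set.forall_mem_image.mpr fun U _ ↦ U.isClosed) hclosure
  exact ⟨U, hUS, mem_closedSubmodulePFilter.mpr hUp⟩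

end ClosedSubmoduleFilter

section ClosedLine

variable {𝕜 E : Type*} [NontriviallyNormedField 𝕜] [CompleteSpace 𝕜]
  [AddCommGroup E] [TopologicalSpace E] [IsTopologicalAddGroup E] [T2Space E]
  [Module 𝕜 E] [ContinuousSMul 𝕜 E]

variable (𝕜) in
/-- The span of a vector as an element of the lattice of closed subspaces: a line if `v ≠ 0`, and
`⊥` if `v = 0`. -/
def closedLine (v : E) : ClosedSubmodule 𝕜 E where
  toSubmodule := span 𝕜 {v}
  isClosed' := closed_of_finiteDimensional _

theorem mem_closedLine_iff {v x : E} : x ∈ closedLine 𝕜 v ↔ ∃ c : 𝕜, c • v = x :=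
  mem_span_singleton

theorem closedLine_le_iff {v : E} {U : ClosedSubmodule 𝕜 E} : closedLine 𝕜 v ≤ U ↔ v ∈ U :=
  span_singleton_le_iff_mem v U.toSubmodule

theorem isAtom_closedLine {v : E} (hv : v ≠ 0) : IsAtom (closedLine 𝕜 v) := by
  have hspan : IsAtom (span 𝕜 {v}) := nonzero_span_atom v hv
  exact ⟨fun hbot ↦ hspan.ne_bot (congrArg ClosedSubmodule.toSubmodule hbot),
    fun U hU ↦ ClosedSubmodule.toSubmodule_injective (hspan.2 U.toSubmodule hU)⟩

theorem exists_eq_closedLine_of_isAtom {U : ClosedSubmodule 𝕜 E} (hU : IsAtom U) :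
    ∃ v ≠ 0, U = closedLine 𝕜 v := by
  have hne : U.toSubmodule ≠ ⊥ := fun h ↦ hU.ne_bot (ClosedSubmodule.toSubmodule_injective h)
  obtain ⟨v, hvU, hv⟩ := U.toSubmodule.exists_mem_ne_zero_of_ne_bot hne
  exact ⟨v, hv, ((hU.le_iff_eq (isAtom_closedLine hv).ne_bot).mp (closedLine_le_iff.mpr hvU)).symm⟩

instance : IsAtomistic (ClosedSubmodule 𝕜 E) := by
  refine CompleteLattice.isAtomistic_iff.mpr fun U ↦
    ⟨{A | IsAtom A ∧ A ≤ U}, le_antisymm (fun v hvU ↦ ?_) (sSup_le fun _ hA ↦ hA.2),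
      fun _ hA ↦ hA.1⟩
  obtain rfl | hv := eq_or_ne v 0
  · exact zero_mem _
  · exact closedLine_le_iff.mp (le_sSup ⟨isAtom_closedLine hv, closedLine_le_iff.mpr hvU⟩)

theorem not_supPrime_closedLine {v w : E} (hvw : LinearIndependent 𝕜 ![v, w]) :
    ¬ SupPrime (closedLine 𝕜 v) := by
  intro hprime
  rw [LinearIndependent.pair_iff] at hvw
  have hle : closedLine 𝕜 v ≤ closedLine 𝕜 w ⊔ closedLine 𝕜 (v - w) := by
    have hw : w ∈ closedLine 𝕜 w ⊔ closedLine 𝕜 (v - w) := closedLine_le_iff.mp le_sup_left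
    have hsub : v - w ∈ closedLine 𝕜 w ⊔ closedLine 𝕜 (v - w) := closedLine_le_iff.mp le_sup_right
    simpa only [closedLine_le_iff, add_sub_cancel] using add_mem hw hsub
  obtain hmem | hmem := hprime.2 hle <;>
    obtain ⟨c, hc⟩ := mem_closedLine_iff.mp (closedLine_le_iff.mp hmem)
  · exact one_ne_zero (hvw 1 (-c) (by rw [← hc]; module)).1
  · obtain ⟨hone, hc_zero⟩ := hvw (1 - c) c (by rw [← sub_eq_zero.mpr hc.symm]; module)
    rw [hc_zero, sub_zero] at hone
    exact one_ne_zero hone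

theorem not_supPrime_of_isAtom (hrank : 1 < Module.rank 𝕜 E) {U : ClosedSubmodule 𝕜 E}
    (hU : IsAtom U) : ¬ SupPrime U := by
  obtain ⟨v, hv, rfl⟩ := exists_eq_closedLine_of_isAtom hU
  obtain ⟨w, hvw⟩ := exists_linearIndependent_pair_of_one_lt_rank hrank hv
  exact not_supPrime_closedLine hvw

theorem no_points_in_closed_subspace_lattice_general (hrank : 1 < Module.rank 𝕜 E)
    (F : Order.PFilter (ClosedSubmodule 𝕜 E)) : ¬ IsCompletelyPrime F := by
  intro hF
  obtain ⟨U, hU, hUF⟩ := hF.exists_isAtom_mem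
  exact not_supPrime_of_isAtom hrank hU (hF.supPrime_of_isAtom_of_mem hU hUF)

end ClosedLine

/-- If `H` is a complex Hilbert space of dimension greater than one, then the lattice of closed
subspaces of `H` has no points: there is no nonempty collection `p` of closed subspaces of `H`
which avoids the zero subspace, is closed under binary intersections, is upward closed (among
closed subspaces), and is such that whenever the closed linear span of a family of closed
subspaces belongs to `p`, some member of the family belongs to `p`. -/
theorem no_points_in_closed_subspace_lattice {H : Type*} [NormedAddCommGroup H]
    [InnerProductSpace ℂ H] [CompleteSpace H]
    (hdim : ∃ x y : H, LinearIndependent ℂ ![x, y]) :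
    ¬ ∃ p : Set (Submodule ℂ H),
        (∀ U ∈ p, IsClosed (U : Set H)) ∧
        p.Nonempty ∧
        (⊥ : Submodule ℂ H) ∉ p ∧
        (∀ U ∈ p, ∀ V ∈ p, U ⊓ V ∈ p) ∧
        (∀ U ∈ p, ∀ V : Submodule ℂ H, IsClosed (V : Set H) → U ≤ V → V ∈ p) ∧
        (∀ S : Set (Submodule ℂ H), (∀ U ∈ S, IsClosed (U : Set H)) →
          (sSup S).topologicalClosure ∈ p → ∃ U ∈ S, U ∈ p) := by
  rintro ⟨p, hclosed, hne, -, hinf, hup, hsup⟩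
  exact no_points_in_closed_subspace_lattice_general
    (hdim.elim fun _ ⟨_, hxy⟩ ↦ one_lt_rank_of_linearIndependent_pair hxy) _
    (isCompletelyPrime_closedSubmodulePFilter hclosed hne hinf hup hsup)
end

section
/- Let M be a Hausdorff topological space that is first countable and Lindelöf, and let B(M) be the σ-algebra of Borel subsets of M. A nonempty set p of Borel subsets of M is a σ-point of B(M) — meaning (1) ∅ ∉ p; (2) A, B ∈ p implies A ∩ B ∈ p; (3) if A ∈ p, B is Borel and A ⊆ B then B ∈ p; (4) whenever a countable union of Borel sets belongs to p, some member of the sequence belongs to p — if and only if there exists x ∈ M such that p = {A Borel : x ∈ A}. -/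
/-!
A σ-point contains every measurable set or its complement, hence is closed under countable
intersections. If every point had an open neighbourhood outside the σ-point, then countably many of
these would cover the space and one of them would belong to the σ-point after all; so some `x` has
all its open neighbourhoods in the σ-point. In a first countable T₁ space `{x}` is the intersection
of countably many of them, so `{x}` belongs to the σ-point and generates it.
-/

open Set

/-- A σ-point of the σ-algebra of measurable subsets of `α`, encoded as a set of subsets of `α`
whose members are required to be measurable. -/
structure IsSigmaPoint {α : Type*} [MeasurableSpace α] (p : Set (Set α)) : Prop where
  measurableSet : ∀ A ∈ p, MeasurableSet A
  nonempty : p.Nonempty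
  empty_notMem : ∅ ∉ p
  inter_mem : ∀ A ∈ p, ∀ B ∈ p, A ∩ B ∈ p
  mem_of_superset : ∀ A ∈ p, ∀ B : Set α, MeasurableSet B → A ⊆ B → B ∈ p
  exists_mem_of_iUnion_nat_mem :
    ∀ f : ℕ → Set α, (∀ n, MeasurableSet (f n)) → (⋃ n, f n) ∈ p → ∃ n, f n ∈ p

namespace IsSigmaPoint

section MeasurableSpace

variable {α : Type*} [MeasurableSpace α] {p : Set (Set α)}

theorem principal (x : α) : IsSigmaPoint {A : Set α | MeasurableSet A ∧ x ∈ A} where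
  measurableSet _ hA := hA.1
  nonempty := ⟨univ, MeasurableSet.univ, mem_univ x⟩
  empty_notMem h := h.2
  inter_mem _ hA _ hB := ⟨hA.1.inter hB.1, hA.2, hB.2⟩
  mem_of_superset _ hA _ hB hAB := ⟨hB, hAB hA.2⟩
  exists_mem_of_iUnion_nat_mem _ hf h :=
    (mem_iUnion.1 h.2).imp fun n hn => ⟨hf n, hn⟩

theorem univ_mem (hp : IsSigmaPoint p) : univ ∈ p :=
  have ⟨A, hA⟩ := hp.nonempty
  hp.mem_of_superset A hA univ MeasurableSet.univ (subset_univ A)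

theorem inter_nonempty (hp : IsSigmaPoint p) {A B : Set α} (hA : A ∈ p) (hB : B ∈ p) :
    (A ∩ B).Nonempty :=
  nonempty_iff_ne_empty.2 fun h => hp.empty_notMem (h ▸ hp.inter_mem A hA B hB)

theorem compl_notMem (hp : IsSigmaPoint p) {A : Set α} (hA : A ∈ p) : Aᶜ ∉ p := fun hAc =>
  (hp.inter_nonempty hA hAc).ne_empty (inter_compl_self A)

theorem exists_mem_of_iUnion_mem (hp : IsSigmaPoint p) {ι : Sort*} [Countable ι] {f : ι → Set α}
    (hf : ∀ i, MeasurableSet (f i)) (h : ⋃ i, f i ∈ p) : ∃ i, f i ∈ p := by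
  cases isEmpty_or_nonempty ι with
  | inl _ => exact absurd (iUnion_of_empty f ▸ h) hp.empty_notMem
  | inr _ =>
    obtain ⟨g, hg⟩ := exists_surjective_nat ι
    rw [← hg.iUnion_comp] at h
    obtain ⟨n, hn⟩ := hp.exists_mem_of_iUnion_nat_mem (f ∘ g) (fun n => hf (g n)) h
    exact ⟨g n, hn⟩

theorem mem_or_compl_mem (hp : IsSigmaPoint p) {A : Set α} (hA : MeasurableSet A) :
    A ∈ p ∨ Aᶜ ∈ p := by
  have hcover : ⋃ b : Bool, cond b A Aᶜ ∈ p := by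
    rw [← union_eq_iUnion, union_compl_self]
    exact hp.univ_mem
  simpa only [Bool.exists_bool, cond_true, cond_false, or_comm] using
    hp.exists_mem_of_iUnion_mem (Bool.forall_bool.2 ⟨hA.compl, hA⟩) hcover

theorem sInter_mem (hp : IsSigmaPoint p) {S : Set (Set α)} (hS : S.Countable) (hSp : S ⊆ p) :
    ⋂₀ S ∈ p := by
  have hmeas : ∀ A ∈ S, MeasurableSet A := fun A hA => hp.measurableSet A (hSp hA)
  refine (hp.mem_or_compl_mem (MeasurableSet.sInter hS hmeas)).resolve_right fun hcompl => ?_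
  rw [sInter_eq_iInter, compl_iInter] at hcompl
  have := hS.to_subtype
  obtain ⟨A, hA⟩ := hp.exists_mem_of_iUnion_mem (fun A : S => (hmeas A A.2).compl) hcompl
  exact hp.compl_notMem (hSp A.2) hA

theorem eq_principal_of_singleton_mem (hp : IsSigmaPoint p) {x : α} (hx : {x} ∈ p) :
    p = {A : Set α | MeasurableSet A ∧ x ∈ A} := by
  ext A
  refine ⟨fun hA => ⟨hp.measurableSet A hA, ?_⟩, fun ⟨hA, hxA⟩ =>
    hp.mem_of_superset {x} hx A hA (singleton_subset_iff.2 hxA)⟩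
  exact inter_singleton_nonempty.1 (hp.inter_nonempty hA hx)

end MeasurableSpace

section Topology

variable {M : Type*} [TopologicalSpace M] [MeasurableSpace M] {p : Set (Set M)}

theorem exists_forall_isOpen_mem [OpensMeasurableSpace M] [LindelofSpace M]
    (hp : IsSigmaPoint p) : ∃ x, ∀ U : Set M, IsOpen U → x ∈ U → U ∈ p := by
  by_contra! hcon
  choose U hUopen hxU hUp using hcon
  obtain ⟨t, ht, hcover⟩ :=
    LindelofSpace.elim_nhds_subcover U fun x => (hUopen x).mem_nhds (hxU x)
  rw [biUnion_eq_iUnion] at hcover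
  have := ht.to_subtype
  obtain ⟨x, hx⟩ := hp.exists_mem_of_iUnion_mem (fun x : t => (hUopen x).measurableSet)
    (hcover ▸ hp.univ_mem)
  exact hUp x hx

theorem mem_of_isGδ (hp : IsSigmaPoint p) {x : M} (hx : ∀ U : Set M, IsOpen U → x ∈ U → U ∈ p)
    {A : Set M} (hA : IsGδ A) (hxA : x ∈ A) : A ∈ p := by
  obtain ⟨S, hSopen, hS, rfl⟩ := hA
  exact hp.sInter_mem hS fun U hU => hx U (hSopen U hU) (hxA U hU)

end Topology

end IsSigmaPoint

theorem sigma_point_of_borel_iff_principal_general {M : Type*} [TopologicalSpace M]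
    [LindelofSpace M] [MeasurableSpace M] [OpensMeasurableSpace M]
    (hGδ : ∀ x : M, IsGδ {x}) (p : Set (Set M)) :
    IsSigmaPoint p ↔ ∃ x : M, p = {A : Set M | MeasurableSet A ∧ x ∈ A} := by
  constructor
  · intro hp
    obtain ⟨x, hx⟩ := hp.exists_forall_isOpen_mem
    exact ⟨x, hp.eq_principal_of_singleton_mem (hp.mem_of_isGδ hx (hGδ x) (mem_singleton x))⟩
  · rintro ⟨x, rfl⟩
    exact IsSigmaPoint.principal x

/-- Let `M` be a Hausdorff, first countable, Lindelöf topological space, and let `p` be a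
nonempty collection of Borel subsets of `M`. Then `p` is a σ-point of the Borel σ-algebra
(avoids `∅`, is closed under binary intersections, is upward closed among Borel sets, and
whenever a countable union of Borel sets belongs to `p` some member of the sequence belongs
to `p`) if and only if `p = {A Borel : x ∈ A}` for some `x ∈ M`. -/
theorem sigma_point_of_borel_iff_principal {M : Type*} [TopologicalSpace M] [T2Space M]
    [FirstCountableTopology M] [LindelofSpace M] [MeasurableSpace M] [BorelSpace M]
    (p : Set (Set M)) (hBorel : ∀ A ∈ p, MeasurableSet A) (hne : p.Nonempty) :
    ((∅ : Set M) ∉ p ∧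
     (∀ A ∈ p, ∀ B ∈ p, A ∩ B ∈ p) ∧
     (∀ A ∈ p, ∀ B : Set M, MeasurableSet B → A ⊆ B → B ∈ p) ∧
     (∀ f : ℕ → Set M, (∀ n, MeasurableSet (f n)) → (⋃ n, f n) ∈ p → ∃ n, f n ∈ p)) ↔
    ∃ x : M, p = {A : Set M | MeasurableSet A ∧ x ∈ A} := by
  rw [← sigma_point_of_borel_iff_principal_general IsGδ.singleton p]
  exact ⟨fun ⟨hempty, hinter, hsup, hUnion⟩ => ⟨hBorel, hne, hempty, hinter, hsup, hUnion⟩,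
    fun ⟨_, _, hempty, hinter, hsup, hUnion⟩ => ⟨hempty, hinter, hsup, hUnion⟩⟩
end

section
/- Let M be a topological space and let J be a proper dual ideal in the lattice T(M) of open subsets of M (i.e. ∅ ∉ J, J is closed under binary intersection, and U ∈ J together with U ⊆ V open implies V ∈ J). Then J is a quasipoint of T(M) if and only if for every open U ⊆ M, either U ∈ J or U^c ∈ J, where U^c := M \ cl(U) is the pseudocomplement of U (the complement of the closure of U). -/
open TopologicalSpace

/-!
If `a` meets every element of a filter base `B`, then the elements above some `b ⊓ a` with `b ∈ B`
form a filter base containing `B` and `a`, so a quasipoint `B` already contains `a`. Otherwise some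
`b ∈ B` is disjoint from `a`; then `b` lies below the pseudocomplement of `a`, which belongs to `B`
because quasipoints are upper sets. Conversely, no filter base contains two disjoint elements, so a
filter base containing `a` or its pseudocomplement for every `a` cannot be enlarged.
-/

section PartialOrder

variable {L : Type*} [PartialOrder L] [OrderBot L] {B : Set L} {a b : L}

theorem IsFilterBase.not_disjoint_s14 (hB : IsFilterBase B) (ha : a ∈ B) (hb : b ∈ B) :
    ¬Disjoint a b := by
  intro hab
  obtain ⟨-, hbot, hdir⟩ := hB
  obtain ⟨c, hc, hca, hcb⟩ := hdir a ha b hb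
  exact hbot (le_bot_iff.mp (hab hca hcb) ▸ hc)

protected theorem IsFilterBase.upperClosure (hB : IsFilterBase B) :
    IsFilterBase (upperClosure B : Set L) := by
  obtain ⟨hne, hbot, hdir⟩ := hB
  refine ⟨hne.mono subset_upperClosure, ?_, ?_⟩
  · rintro ⟨b, hb, hb_le⟩
    exact hbot (le_bot_iff.mp hb_le ▸ hb)
  · rintro x ⟨b, hb, hbx⟩ y ⟨c, hc, hcy⟩
    obtain ⟨d, hd, hdb, hdc⟩ := hdir b hb c hc
    exact ⟨d, subset_upperClosure hd, hdb.trans hbx, hdc.trans hcy⟩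

theorem IsQuasipoint.upperClosure_eq (hB : IsQuasipoint B) : (upperClosure B : Set L) = B :=
  hB.2 _ hB.1.upperClosure subset_upperClosure

theorem IsQuasipoint.isUpperSet_s14 (hB : IsQuasipoint B) : IsUpperSet B :=
  hB.upperClosure_eq ▸ (upperClosure B).upper

theorem IsFilterBase.isQuasipoint_of_forall_mem_or_exists_disjoint (hB : IsFilterBase B)
    (h : ∀ a, a ∈ B ∨ ∃ b ∈ B, Disjoint b a) : IsQuasipoint B := by
  refine ⟨hB, fun C hC hBC => Set.Subset.antisymm (fun a ha => ?_) hBC⟩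
  refine (h a).resolve_right ?_
  rintro ⟨b, hb, hba⟩
  exact hC.not_disjoint_s14 (hBC hb) ha hba

end PartialOrder

section SemilatticeInf

variable {L : Type*} [SemilatticeInf L] [OrderBot L] {B : Set L} {a : L}

theorem IsFilterBase.image_inf_right (hB : IsFilterBase B) (ha : ∀ b ∈ B, ¬Disjoint b a) :
    IsFilterBase ((· ⊓ a) '' B) := by
  obtain ⟨hne, -, hdir⟩ := hB
  refine ⟨hne.image _, ?_, ?_⟩
  · rintro ⟨b, hb, hba⟩
    exact ha b hb (disjoint_iff.mpr hba)
  · rintro _ ⟨b, hb, rfl⟩ _ ⟨c, hc, rfl⟩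
    obtain ⟨d, hd, hdb, hdc⟩ := hdir b hb c hc
    exact ⟨d ⊓ a, Set.mem_image_of_mem _ hd, inf_le_inf_right a hdb, inf_le_inf_right a hdc⟩

theorem IsQuasipoint.mem_of_forall_not_disjoint (hB : IsQuasipoint B)
    (ha : ∀ b ∈ B, ¬Disjoint b a) : a ∈ B := by
  have hC := (hB.1.image_inf_right ha).upperClosure
  have hBC : B ⊆ upperClosure ((· ⊓ a) '' B) :=
    fun b hb => ⟨b ⊓ a, Set.mem_image_of_mem _ hb, inf_le_left⟩
  obtain ⟨b, hb⟩ := hB.1.1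
  rw [← hB.2 _ hC hBC]
  exact ⟨b ⊓ a, Set.mem_image_of_mem _ hb, inf_le_right⟩

theorem IsQuasipoint.mem_or_exists_disjoint (hB : IsQuasipoint B) (a : L) :
    a ∈ B ∨ ∃ b ∈ B, Disjoint b a := by
  by_contra! h
  exact h.1 (hB.mem_of_forall_not_disjoint h.2)

theorem dualIdeal_opens_quasipoint_iff_pseudocomplement_alternative_general
    {pc : L → L} (hpc : ∀ a b, b ≤ pc a ↔ Disjoint b a) (hB : IsFilterBase B) :
    IsQuasipoint B ↔ ∀ a, a ∈ B ∨ pc a ∈ B := by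
  constructor
  · intro hq a
    refine (hq.mem_or_exists_disjoint a).imp_right ?_
    rintro ⟨b, hb, hba⟩
    exact hq.isUpperSet_s14 ((hpc a b).mpr hba) hb
  · intro h
    refine hB.isQuasipoint_of_forall_mem_or_exists_disjoint fun a => (h a).imp_right fun ha => ?_
    exact ⟨pc a, ha, (hpc a (pc a)).mp le_rfl⟩

end SemilatticeInf

theorem opens_le_compl_closure_iff_disjoint {X : Type*} [TopologicalSpace X] (U V : Opens X) :
    V ≤ ⟨(closure (U : Set X))ᶜ, isClosed_closure.isOpen_compl⟩ ↔ Disjoint V U :=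
  calc
    _ ↔ (V : Set X) ⊆ (closure (U : Set X))ᶜ := Iff.rfl
    _ ↔ Disjoint (V : Set X) (closure U) := Set.subset_compl_iff_disjoint_right
    _ ↔ Disjoint (V : Set X) U :=
      ⟨fun h => h.mono_right subset_closure, fun h => h.closure_right V.isOpen⟩
    _ ↔ Disjoint V U := Opens.coe_disjoint

/-- A proper dual ideal `J` in the lattice of open subsets of a topological space `M` is a
quasipoint iff for every open `U`, either `U ∈ J` or the pseudocomplement
`U^c = M \ cl U` belongs to `J`. -/
theorem dualIdeal_opens_quasipoint_iff_pseudocomplement_alternative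
    {M : Type*} [TopologicalSpace M] (J : Set (Opens M))
    (hne : J.Nonempty) (hbot : (⊥ : Opens M) ∉ J)
    (hinf : ∀ U ∈ J, ∀ V ∈ J, U ⊓ V ∈ J)
    (hup : ∀ U ∈ J, ∀ V : Opens M, U ≤ V → V ∈ J) :
    IsQuasipoint J ↔
      ∀ U : Opens M,
        U ∈ J ∨ (⟨(closure (U : Set M))ᶜ, isClosed_closure.isOpen_compl⟩ : Opens M) ∈ J := by
  have hJ : IsFilterBase J :=
    ⟨hne, hbot, fun U hU V hV => ⟨U ⊓ V, hinf U hU V hV, inf_le_left, inf_le_right⟩⟩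
  exact dualIdeal_opens_quasipoint_iff_pseudocomplement_alternative_general
    opens_le_compl_closure_iff_disjoint hJ
end
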